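/- arXiv:1801.08778 — 4 statements merged into one kernel-verified Lean document; each statement's English description precedes it below -/
import Mathlib

section
/- For every i ≥ 1 and every L with |p_{m_i}| − |p_{m_i − 1}| + 1 ≤ L ≤ |p_{m_{i+1}}| − |p_{m_{i+1} − 1}|, the repetitivity function is given by R(L) = 2·|p_{K(m_i) − 1}| + 1 − |p_{m_i}| + |p_{m_i − 1}| + L whenever L ≤ |p_{m_i}| + 1, and R(L) = 2·|p_{K(m_i) − 1}| + 1 + L whenever |p_{m_i}| + 2 ≤ L (here m_i − 1, m_{i+1} − 1 and K(m_i) − 1 denote block indices). -/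
/-!
Write `N_k = |p_k| + 1 = n_0 ⋯ n_k`. All blocks are prefixes of one infinite word `x₁ x₂ …` with
`x_t = a_j`, where the level `j` of `t` is least with `N_j ∤ t`; the language is the set of factors
of this word (`Toep.block_eq`, `Toep.mem_lang`). So `R(L) = L + D` amounts to a statement about
starting positions: each word of length `L` starts in every window of `D + 1` consecutive
positions, but some word is missing from some window of `D` positions (`Toep.repet_eq`).

Let `m = m_i`, `M = m_{i+1}`, `K = K(m)`. The definition of `m` forces `a_K = a_m` and
`a_j ≠ a_m` for `m < j < K` (`Toep.jump`), and `{a_M, …, a_K}` is all of `A_M`.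

Upper bounds (`Toep.upper_long`, `Toep.upper_short`): a word of length `L ≤ N_k` sees at most one
letter of level `> k`. If that letter is some `a_j` with `j > k`, the word reappears around every
position of level `j`, and each window of `2 N_{j-1}` positions contains one. If it equals `a_k`
or is absent, the word is a piece of the periodic word with period `p_{k-1} a_k`. For `k = M` such a
piece of length at most `N_M - N_{M-1}` lies in `p_M`. For `k = m` it lies in `p_m a_m p_m`, around
a position of level `K`; since there it may be shifted by up to `N_m - N_{m-1}`, the window can be
shorter by that amount.

Lower bounds (`Toep.lower_long`, `Toep.lower_short`): the word starting at `q = N_K + N_{K-1}`, a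
position of level `K`, is compared with the window of starting positions from `N_K - N_{K-1} + 1`
on. An occurrence at `r` is aligned modulo `N_{m-1}` (`Toep.sync`) and its first `n_m` letters of
level `≥ m` all equal `a_m`; one of them has level `> m`, hence level `≥ K`, and this forces it to
lie at `q` or later (`Toep.occ`). If `L > N_m`, the letter `a_{m+1} ≠ a_m` at `q + N_m` excludes
all `r < q`.
-/

open Filter

/-- The blocks `p k` of the simple Toeplitz subshift coded by `a` and `n`:
`p 0 = a 0 ^ (n 0 - 1)` and `p (k+1)` consists of `n (k+1)` copies of `p k`
separated by `n (k+1) - 1` single letters `a (k+1)`. -/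
def ToeplitzBlock {A : Type*} (a : ℕ → A) (n : ℕ → ℕ) : ℕ → List A
  | 0 => List.replicate (n 0 - 1) (a 0)
  | k + 1 => List.intercalate [a (k + 1)] (List.replicate (n (k + 1)) (ToeplitzBlock a n k))

/-- `lenPrev a n k = |p (k-1)|`, with the convention `|p (-1)| = 0`. -/
def lenPrev {A : Type*} (a : ℕ → A) (n : ℕ → ℕ) : ℕ → ℕ
  | 0 => 0
  | k + 1 => (ToeplitzBlock a n k).length

/-- The language of the simple Toeplitz subshift: all finite words occurring as a
factor of some block `p k`. -/
def ToeplitzLang {A : Type*} (a : ℕ → A) (n : ℕ → ℕ) : Set (List A) :=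
  {u | ∃ k, u <:+: ToeplitzBlock a n k}

/-- The complexity function `C L`. -/
noncomputable def cmpl {A : Type*} (a : ℕ → A) (n : ℕ → ℕ) (L : ℕ) : ℕ :=
  Set.ncard {u | u ∈ ToeplitzLang a n ∧ u.length = L}

/-- The palindrome complexity function `P L`. -/
noncomputable def palCmpl {A : Type*} (a : ℕ → A) (n : ℕ → ℕ) (L : ℕ) : ℕ :=
  Set.ncard {u | u ∈ ToeplitzLang a n ∧ u.length = L ∧ u.reverse = u}

/-- `Ak a k = {a j : j ≥ k}`. -/
def Ak {A : Type*} (a : ℕ → A) (k : ℕ) : Set A := {x | ∃ j, k ≤ j ∧ a j = x}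

/-- The eventual alphabet `A_ev = ⋂ k, A_k`. -/
def Aev {A : Type*} (a : ℕ → A) : Set A := ⋂ k, Ak a k

/-- `Kf a k = min {j > k : {a (k+1), …, a j} = A (k+1)}`. -/
noncomputable def Kf {A : Type*} (a : ℕ → A) (k : ℕ) : ℕ :=
  sInf {j | k < j ∧ {x | ∃ i, k + 1 ≤ i ∧ i ≤ j ∧ a i = x} = Ak a (k + 1)}

/-- The positions `m i` at which `Kf` increases: `m 0 = 0` and
`m (i+1) = min {j > m i : Kf j > Kf (m i)}`. -/
noncomputable def mseq {A : Type*} (a : ℕ → A) : ℕ → ℕ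
  | 0 => 0
  | i + 1 => sInf {j | mseq a i < j ∧ Kf a (mseq a i) < Kf a j}

/-- The repetitivity function `R L`: the least `L'` such that every word of
length `L` of the language is a factor of every word of length `L'`. -/
noncomputable def repet {A : Type*} (a : ℕ → A) (n : ℕ → ℕ) (L : ℕ) : ℕ :=
  sInf {L' | ∀ u ∈ ToeplitzLang a n, u.length = L →
    ∀ w ∈ ToeplitzLang a n, w.length = L' → u <:+: w}

namespace Toep

/-! ### The limit word -/

/-- `P n k = n 0 ⋯ n (k-1)`, so that `|p k| + 1 = P n (k+1)` and `P n 0 = 1`. -/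
def P (n : ℕ → ℕ) (k : ℕ) : ℕ := ∏ i ∈ Finset.range k, n i

/-- The level of a position `t ≥ 1`: the least `j` with `P n (j+1) ∤ t`
(the junk value `0` at `t = 0`). -/
noncomputable def lev (n : ℕ → ℕ) (t : ℕ) : ℕ := sInf {j | ¬ P n (j + 1) ∣ t}

/-- The letter at position `t ≥ 1` of the one-sided infinite word of which every block `p k`
is a prefix. -/
noncomputable def x {A : Type*} (a : ℕ → A) (n : ℕ → ℕ) (t : ℕ) : A := a (lev n t)

/-- The factor of length `L` of the limit word at positions `s + 1, …, s + L`. -/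
noncomputable def X {A : Type*} (a : ℕ → A) (n : ℕ → ℕ) (s L : ℕ) : List A :=
  (List.range L).map fun i => x a n (s + 1 + i)

section
variable {A : Type*} {a : ℕ → A} {n : ℕ → ℕ}

lemma P_zero : P n 0 = 1 := by simp [P]

lemma P_succ (k : ℕ) : P n (k + 1) = P n k * n k := by simp [P, Finset.prod_range_succ]

lemma P_pos (hn : ∀ k, 2 ≤ n k) (k : ℕ) : 0 < P n k :=
  Finset.prod_pos fun i _ => by have := hn i; omega

lemma P_dvd {j k : ℕ} (h : j ≤ k) : P n j ∣ P n k := by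
  induction h with
  | refl => exact dvd_rfl
  | step _ ih => exact ih.trans (by rw [P_succ]; exact dvd_mul_right _ _)

lemma P_le (hn : ∀ k, 2 ≤ n k) {j k : ℕ} (h : j ≤ k) : P n j ≤ P n k :=
  Nat.le_of_dvd (P_pos hn k) (P_dvd h)

lemma two_P_le (hn : ∀ k, 2 ≤ n k) {j k : ℕ} (h : j + 1 ≤ k) : 2 * P n j ≤ P n k := by
  refine le_trans ?_ (P_le hn h)
  rw [P_succ, mul_comm]
  exact Nat.mul_le_mul_left _ (hn j)

lemma lt_P (hn : ∀ k, 2 ≤ n k) (k : ℕ) : k < P n k := by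
  induction k with
  | zero => simp [P_zero]
  | succ k ih => have := two_P_le hn (le_refl (k + 1)); omega

lemma lev_eq {j t : ℕ} (h1 : P n j ∣ t) (h2 : ¬ P n (j + 1) ∣ t) : lev n t = j := by
  apply le_antisymm
  · exact Nat.sInf_le h2
  · refine le_csInf ⟨j, h2⟩ fun i hi => ?_
    by_contra hlt
    exact hi ((P_dvd (by omega)).trans h1)

lemma x_eq {j t : ℕ} (h1 : P n j ∣ t) (h2 : ¬ P n (j + 1) ∣ t) : x a n t = a j := by
  rw [x, lev_eq h1 h2]

lemma exists_lev (hn : ∀ k, 2 ≤ n k) {t : ℕ} (ht : 0 < t) (k : ℕ) (hk : P n k ∣ t) :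
    ∃ j, k ≤ j ∧ P n j ∣ t ∧ ¬ P n (j + 1) ∣ t := by
  have hex : ∃ j, ¬ P n j ∣ t := ⟨t, fun h => by
    have := Nat.le_of_dvd ht h
    have := lt_P hn t
    omega⟩
  classical
  have h1 := Nat.find_spec hex
  have hkf : k < Nat.find hex := by
    by_contra hlt
    exact h1 ((P_dvd (by omega)).trans hk)
  obtain ⟨j, hj⟩ : ∃ j, Nat.find hex = j + 1 := ⟨Nat.find hex - 1, by omega⟩
  refine ⟨j, by omega, ?_, hj ▸ h1⟩
  have := Nat.find_min hex (m := j) (by omega)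
  simpa using this

/-- Positions that are not multiples of `P n k` carry letters that depend only on the residue
modulo `P n k`. -/
lemma x_congr (hn : ∀ k, 2 ≤ n k) {k t t' : ℕ} (h : t ≡ t' [MOD P n k]) (hk : ¬ P n k ∣ t) :
    x a n t = x a n t' := by
  have ht : 0 < t := Nat.pos_of_ne_zero (by rintro rfl; simp at hk)
  obtain ⟨j, -, h1, h2⟩ := exists_lev hn ht 0 (by simp [P_zero])
  have hjk : j < k := by
    by_contra hlt
    exact hk ((P_dvd (by omega)).trans h1)
  rw [x_eq h1 h2, x_eq]
  · exact ((h.of_dvd (P_dvd hjk.le)).dvd_iff dvd_rfl).1 h1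
  · rw [← (h.of_dvd (P_dvd hjk)).dvd_iff dvd_rfl]; exact h2

@[simp] lemma X_length (s L : ℕ) : (X a n s L).length = L := by simp [X]

lemma X_add (s L₁ L₂ : ℕ) : X a n s (L₁ + L₂) = X a n s L₁ ++ X a n (s + L₁) L₂ := by
  simp only [X, List.range_add, List.map_append, List.map_map]
  congr 1
  apply List.map_congr_left
  intro i _
  simp only [Function.comp]
  congr 1
  omega

lemma X_eq_iff {r q L : ℕ} :
    X a n r L = X a n q L ↔ ∀ i, 1 ≤ i → i ≤ L → x a n (r + i) = x a n (q + i) := by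
  simp only [X, List.map_inj_left, List.mem_range]
  constructor
  · intro h i h1 h2
    have := h (i - 1) (by omega)
    rwa [show r + 1 + (i - 1) = r + i by omega, show q + 1 + (i - 1) = q + i by omega] at this
  · intro h i h1
    have := h (1 + i) (by omega) (by omega)
    rwa [← add_assoc, ← add_assoc] at this

lemma infix_X {u : List A} {s L : ℕ} :
    u <:+: X a n s L ↔ ∃ r, s ≤ r ∧ r + u.length ≤ s + L ∧ u = X a n r u.length := by
  constructor
  · rintro ⟨v, w, h⟩
    have hl := congrArg List.length h
    simp only [List.length_append, X_length] at hl
    rw [← hl, X_add, X_add] at h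
    have h2 := List.append_inj_left h (by simp)
    have h3 := List.append_inj_right h2 (by simp)
    exact ⟨s + v.length, by omega, by omega, h3⟩
  · rintro ⟨r, h1, h2, h3⟩
    refine ⟨X a n s (r - s), X a n (r + u.length) (s + L - (r + u.length)), ?_⟩
    have e : L = (r - s) + u.length + (s + L - (r + u.length)) := by omega
    conv_rhs => rw [e, X_add, X_add]
    rw [show s + (r - s) = r by omega, ← h3, show s + (r - s + u.length) = r + u.length by omega]

/-- Any `c + 1` consecutive copies of the level-`k` prefix inside the level-`k+1` prefix,
starting after `d` copies. -/
lemma intercalate_X (hn : ∀ k, 2 ≤ n k) (k c : ℕ) : ∀ d, c + 1 + d ≤ n (k + 1) →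
    List.intercalate [a (k + 1)] (List.replicate (c + 1) (X a n 0 (P n (k + 1) - 1))) =
      X a n (d * P n (k + 1)) ((c + 1) * P n (k + 1) - 1) := by
  have hp := P_pos hn (k + 1)
  have hshift : ∀ d, X a n 0 (P n (k + 1) - 1) = X a n (d * P n (k + 1)) (P n (k + 1) - 1) := by
    intro d
    rw [X_eq_iff]
    intro i h1 h2
    refine x_congr hn (k := k + 1) ?_ ?_
    · simp [Nat.ModEq]
    · rw [zero_add]
      exact Nat.not_dvd_of_pos_of_lt h1 (by omega)
  induction c with
  | zero => intro d _; simpa [List.intercalate] using hshift d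
  | succ c ih =>
    intro d hd
    have h1 := ih (d + 1) (by omega)
    rw [List.replicate_succ, List.replicate_succ] at *
    rw [List.intercalate_cons_cons, h1]
    have e : (c + 1 + 1) * P n (k + 1) - 1
        = (P n (k + 1) - 1) + 1 + ((c + 1) * P n (k + 1) - 1) := by
      have : 0 < (c + 1) * P n (k + 1) := by positivity
      rw [Nat.add_mul (c + 1) 1]
      omega
    rw [e, X_add, X_add, ← hshift d,
      show d * P n (k + 1) + (P n (k + 1) - 1 + 1) = (d + 1) * P n (k + 1) by
        rw [Nat.add_mul]; omega]
    congr 2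
    have e2 : d * P n (k + 1) + (P n (k + 1) - 1) + 1 = P n (k + 1) * (d + 1) := by
      rw [mul_comm, Nat.mul_add]; omega
    have : x a n (d * P n (k + 1) + (P n (k + 1) - 1) + 1) = a (k + 1) := by
      rw [e2]
      refine x_eq (dvd_mul_right _ _) ?_
      rw [P_succ (k + 1), Nat.mul_dvd_mul_iff_left hp]
      exact Nat.not_dvd_of_pos_of_lt (by omega) (by omega)
    simp [X, this]

lemma block_eq (hn : ∀ k, 2 ≤ n k) (k : ℕ) : ToeplitzBlock a n k = X a n 0 (P n (k + 1) - 1) := by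
  induction k with
  | zero =>
    have h : ∀ i < n 0 - 1, x a n (0 + 1 + i) = a 0 := fun i hi =>
      x_eq (by simp [P_zero]) (by
        rw [P_succ, P_zero, one_mul]
        exact Nat.not_dvd_of_pos_of_lt (by omega) (by omega))
    rw [ToeplitzBlock, P_succ, P_zero, one_mul, X, eq_comm, List.eq_replicate_iff]
    refine ⟨by simp, fun b hb => ?_⟩
    obtain ⟨i, hi, rfl⟩ := List.mem_map.1 hb
    exact h i (List.mem_range.1 hi)
  | succ k ih =>
    have h2 := hn (k + 1)
    have := intercalate_X (a := a) hn k (n (k + 1) - 1) 0 (by omega)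
    rw [show n (k + 1) - 1 + 1 = n (k + 1) by omega, zero_mul] at this
    rw [ToeplitzBlock, ih, this, P_succ (k + 1), mul_comm]

lemma block_length (hn : ∀ k, 2 ≤ n k) (k : ℕ) :
    (ToeplitzBlock a n k).length + 1 = P n (k + 1) := by
  rw [block_eq hn, X_length]
  have := P_pos hn (k + 1)
  omega

lemma mem_lang (hn : ∀ k, 2 ≤ n k) {u : List A} :
    u ∈ ToeplitzLang a n ↔ ∃ s, u = X a n s u.length := by
  constructor
  · rintro ⟨k, hk⟩
    rw [block_eq hn, infix_X] at hk
    obtain ⟨r, -, -, h⟩ := hk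
    exact ⟨r, h⟩
  · rintro ⟨s, h⟩
    refine ⟨s + u.length, ?_⟩
    rw [block_eq hn, infix_X]
    refine ⟨s, by omega, ?_, h⟩
    have := lt_P hn (s + u.length + 1)
    omega

/-- Repetitivity in terms of starting positions: `R(L) = L + D` if every word of length `L` starts
in every window of `D + 1` positions, while some word is missing from some window of `D`
positions. -/
lemma repet_eq (hn : ∀ k, 2 ≤ n k) (L D : ℕ)
    (hup : ∀ s q, ∃ r, s ≤ r ∧ r ≤ s + D ∧ X a n r L = X a n q L)
    (hlow : ∃ s q, ∀ r, s ≤ r → r < s + D → X a n r L ≠ X a n q L) :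
    repet a n L = L + D := by
  have hmem : (L + D) ∈ {L' | ∀ u ∈ ToeplitzLang a n, u.length = L →
      ∀ w ∈ ToeplitzLang a n, w.length = L' → u <:+: w} := by
    intro u hu hul w hw hwl
    obtain ⟨q, hq⟩ := (mem_lang hn).1 hu
    obtain ⟨s, hs⟩ := (mem_lang hn).1 hw
    obtain ⟨r, h1, h2, h3⟩ := hup s q
    rw [hs, infix_X]
    exact ⟨r, h1, by omega, by rw [hul, h3, ← hul]; exact hq⟩
  refine le_antisymm (Nat.sInf_le hmem) (le_csInf ⟨_, hmem⟩ fun L' hL' => ?_)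
  obtain ⟨s, q, h⟩ := hlow
  by_contra hlt
  have := hL' (X a n q L) ((mem_lang hn).2 ⟨q, by simp⟩) (by simp)
    (X a n s L') ((mem_lang hn).2 ⟨s, by simp⟩) (by simp)
  rw [infix_X] at this
  obtain ⟨r, h1, h2, h3⟩ := this
  rw [X_length] at h2 h3
  exact h r h1 (by omega) h3.symm

/-! ### Upper bound -/

/-- A word reappears at every start of the same phase modulo `P n k` provided its letters of level
`≥ k` are matched. -/
lemma copy (hn : ∀ k, 2 ≤ n k) {k r q L : ℕ} (h : q ≡ r [MOD P n k])
    (hx : ∀ i, 1 ≤ i → i ≤ L → P n k ∣ q + i → x a n (r + i) = x a n (q + i)) :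
    X a n r L = X a n q L := by
  rw [X_eq_iff]
  intro i h1 h2
  by_cases hd : P n k ∣ q + i
  · exact hx i h1 h2 hd
  · exact (x_congr hn (h.add_right i) hd).symm

/-- Every residue class is met in every window of full length. -/
lemma exists_modEq {N : ℕ} (hN : 0 < N) (s q : ℕ) : ∃ r, s ≤ r ∧ r < s + N ∧ q ≡ r [MOD N] := by
  refine ⟨s + (q + (N - 1) * s) % N, by omega, by have := Nat.mod_lt (q + (N - 1) * s) hN; omega, ?_⟩
  have h1 : s + (q + (N - 1) * s) % N ≡ s + (q + (N - 1) * s) [MOD N] :=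
    Nat.ModEq.add_left _ (Nat.mod_modEq _ _)
  have h2 : s + (q + (N - 1) * s) = q + N * s := by
    obtain ⟨N, rfl⟩ : ∃ N', N = N' + 1 := ⟨N - 1, by omega⟩
    simp only [Nat.add_sub_cancel]; ring
  rw [h2] at h1
  exact (h1.trans (by simp [Nat.ModEq])).symm

/-- Every window of `2 * P n j` positions contains one of level exactly `j`. -/
lemma exists_level (hn : ∀ k, 2 ≤ n k) (s j : ℕ) :
    ∃ y, s ≤ y ∧ y < s + 2 * P n j ∧ P n j ∣ y ∧ ¬ P n (j + 1) ∣ y := by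
  obtain ⟨y, h1, h2, h3⟩ := exists_modEq (P_pos hn j) s 0
  have h4 : P n j ∣ y := (Nat.modEq_zero_iff_dvd).1 h3.symm
  have hp := P_pos hn j
  by_cases hd : P n (j + 1) ∣ y
  · refine ⟨y + P n j, by omega, by omega, h4.add dvd_rfl, fun h => ?_⟩
    have := Nat.le_of_dvd hp ((Nat.dvd_add_right hd).1 h)
    have := two_P_le hn (le_refl (j + 1))
    omega
  · exact ⟨y, h1, by omega, h4, hd⟩

/-- Two distinct multiples of `N` differ by at least `N`. -/
lemma dvd_unique {N y z : ℕ} (hy : N ∣ y) (hz : N ∣ z) (h1 : y < z + N) (h2 : z < y + N) :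
    y = z := by
  obtain ⟨c, rfl⟩ := hy
  obtain ⟨d, rfl⟩ := hz
  have hc : c < d + 1 := by
    by_contra h
    have := Nat.mul_le_mul_left N (not_lt.1 h)
    rw [Nat.mul_add] at this
    omega
  have hd : d < c + 1 := by
    by_contra h
    have := Nat.mul_le_mul_left N (not_lt.1 h)
    rw [Nat.mul_add] at this
    omega
  rw [show c = d by omega]

/-- If a word of length `≤ P n (k+1)` contains a letter of level `> k` which also occurs as `a j`,
then it reappears around any position of level `j`. -/
lemma copy_letter (hn : ∀ k, 2 ≤ n k) {k j q L i₀ s : ℕ} (hL : L ≤ P n (k + 1)) (hkj : k + 1 ≤ j)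
    (h1 : 1 ≤ i₀) (h2 : i₀ ≤ L) (hd : P n (k + 1) ∣ q + i₀) (hb : x a n (q + i₀) = a j) :
    ∃ r, s ≤ r ∧ r < s + 2 * P n j ∧ X a n r L = X a n q L := by
  obtain ⟨y, hy1, hy2, hy3, hy4⟩ := exists_level hn (s + i₀) j
  have hyk : P n (k + 1) ∣ y := (P_dvd hkj).trans hy3
  refine ⟨y - i₀, by omega, by omega, copy hn (k := k + 1) ?_ ?_⟩
  · apply Nat.ModEq.add_right_cancel' i₀
    rw [show y - i₀ + i₀ = y by omega]
    exact ((Nat.modEq_zero_iff_dvd).2 hd).trans ((Nat.modEq_zero_iff_dvd).2 hyk).symm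
  · intro i hi1 hi2 hi
    have : q + i = q + i₀ := dvd_unique hi hd (by omega) (by omega)
    obtain rfl : i = i₀ := by omega
    rw [show y - i + i = y by omega, hb, x_eq hy3 hy4]

/-- If all letters of level `≥ k` of a word equal `a k`, then it reappears wherever the phase
modulo `P n k` agrees and again all letters of level `≥ k` equal `a k`. -/
lemma copy_run (hn : ∀ k, 2 ≤ n k) {k r q L : ℕ} (h : q ≡ r [MOD P n k])
    (hq : ∀ i, 1 ≤ i → i ≤ L → P n (k + 1) ∣ q + i → x a n (q + i) = a k)
    (hr : ∀ i, 1 ≤ i → i ≤ L → P n (k + 1) ∣ r + i → x a n (r + i) = a k) :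
    X a n r L = X a n q L := by
  refine copy hn h fun i h1 h2 hd => ?_
  have e1 : x a n (q + i) = a k := by
    by_cases h' : P n (k + 1) ∣ q + i
    · exact hq i h1 h2 h'
    · exact x_eq hd h'
  have hd' : P n k ∣ r + i := ((h.add_right i).dvd_iff dvd_rfl).1 hd
  have e2 : x a n (r + i) = a k := by
    by_cases h' : P n (k + 1) ∣ r + i
    · exact hr i h1 h2 h'
    · exact x_eq hd' h'
  rw [e1, e2]

/-- Upper bound for all `L ≤ |p M| - |p (M-1)|`. -/
lemma upper_long (hn : ∀ k, 2 ≤ n k) {M K L : ℕ} (hMK : M + 1 ≤ K)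
    (hcov : ∀ j, M ≤ j → ∃ i, M ≤ i ∧ i ≤ K ∧ a i = a j)
    (hL : L + P n M ≤ P n (M + 1)) (s q : ℕ) :
    ∃ r, s ≤ r ∧ r < s + 2 * P n K ∧ X a n r L = X a n q L := by
  by_cases hA : ∃ i₀, 1 ≤ i₀ ∧ i₀ ≤ L ∧ P n (M + 1) ∣ q + i₀ ∧ x a n (q + i₀) ≠ a M
  · obtain ⟨i₀, h1, h2, hd, hb⟩ := hA
    obtain ⟨j', hj', hd1, hd2⟩ := exists_lev hn (by omega) (M + 1) hd
    rw [x_eq hd1 hd2] at hb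
    obtain ⟨j, hj1, hj2, hj3⟩ := hcov j' (by omega)
    have hjM : j ≠ M := by rintro rfl; exact hb hj3.symm
    obtain ⟨r, hr1, hr2, hr3⟩ := copy_letter (a := a) hn (k := M) (j := j) (q := q) (L := L) (s := s)
      (by omega) (by omega) h1 h2 hd (by rw [x_eq hd1 hd2, hj3])
    have := P_le hn hj2
    exact ⟨r, hr1, by omega, hr3⟩
  · push Not at hA
    -- `y` is the start of a full copy of `p M`, and `r` a start of the right phase inside it.
    obtain ⟨y, hy1, hy2, hy3⟩ := exists_modEq (P_pos hn (M + 1)) s 0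
    have hyd : P n (M + 1) ∣ y := (Nat.modEq_zero_iff_dvd).1 hy3.symm
    obtain ⟨r, hr1, hr2, hr3⟩ := exists_modEq (P_pos hn M) y q
    have := P_le hn hMK
    have := P_le hn (Nat.le_succ M)
    refine ⟨r, by omega, by simp only [Nat.succ_eq_add_one] at *; omega, copy_run hn hr3 hA ?_⟩
    intro i h1 h2 hd
    have := dvd_unique hd hyd (by omega) (by omega)
    omega

/-- Upper bound for `L ≤ |p m| + 1`. -/
lemma upper_short (hn : ∀ k, 2 ≤ n k) {m K L : ℕ} (hmK : m + 2 ≤ K) (haK : a K = a m)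
    (hcov : ∀ j, m + 1 ≤ j → ∃ i, m + 1 ≤ i ∧ i ≤ K ∧ a i = a j)
    (hL : L ≤ P n (m + 1)) (s q : ℕ) :
    ∃ r, s ≤ r ∧ r + P n (m + 1) < s + 2 * P n K + P n m ∧ X a n r L = X a n q L := by
  have hPK : 2 * P n (m + 1) ≤ P n K := two_P_le hn hmK
  have hPm : 2 * P n m ≤ P n (m + 1) := two_P_le hn le_rfl
  have hpos := P_pos hn m
  by_cases hA : ∃ i₀, 1 ≤ i₀ ∧ i₀ ≤ L ∧ P n (m + 1) ∣ q + i₀ ∧ x a n (q + i₀) ≠ a m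
  · obtain ⟨i₀, h1, h2, hd, hb⟩ := hA
    obtain ⟨j', hj', hd1, hd2⟩ := exists_lev hn (by omega) (m + 1) hd
    rw [x_eq hd1 hd2] at hb
    obtain ⟨j, hj1, hj2, hj3⟩ := hcov j' (by omega)
    have hjK : j ≠ K := by rintro rfl; exact hb (by rw [← hj3, haK])
    obtain ⟨r, hr1, hr2, hr3⟩ := copy_letter (a := a) hn (k := m) (j := j) (q := q) (L := L) (s := s)
      hL (by omega) h1 h2 hd (by rw [x_eq hd1 hd2, hj3])
    have : 2 * P n j ≤ P n K := two_P_le hn (by omega)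
    exact ⟨r, hr1, by omega, hr3⟩
  · push Not at hA
    -- `d` is the offset of the first multiple of `P n m` after `q`.
    obtain ⟨z, hz1, hz2, hz3⟩ := exists_modEq hpos (q + 1) 0
    have hzd : P n m ∣ z := (Nat.modEq_zero_iff_dvd).1 hz3.symm
    obtain ⟨d, rfl⟩ : ∃ d, z = q + d := ⟨z - q, by omega⟩
    obtain ⟨y, hy1, hy2, hy3, hy4⟩ := exists_level hn (s + d) K
    have hym : P n (m + 1) ∣ y := (P_dvd (by omega)).trans hy3
    have hxy : x a n y = a m := by rw [x_eq hy3 hy4, haK]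
    have hy0 : 0 < y := by omega
    have hyK := Nat.le_of_dvd hy0 hy3
    -- Any start `r` of the right phase within this range sees only `a m` at levels `≥ m`.
    have key : ∀ r, P n m ∣ r + d → y ≤ r + P n (m + 1) → r + L < y + P n (m + 1) →
        X a n r L = X a n q L := by
      intro r h1 h2 h3
      refine copy_run hn ?_ hA ?_
      · apply Nat.ModEq.add_right_cancel' d
        exact ((Nat.modEq_zero_iff_dvd).2 hzd).trans ((Nat.modEq_zero_iff_dvd).2 h1).symm
      · intro i hi1 hi2 hi
        rw [dvd_unique hi hym (by omega) (by omega), hxy]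
    by_cases hc : y + P n (m + 1) < s + d + 2 * P n K + P n m
    · exact ⟨y - d, by omega, by omega, key _
        (by rw [show y - d + d = y by omega]; exact (P_dvd (by omega)).trans hy3)
        (by omega) (by omega)⟩
    · refine ⟨y + P n m - P n (m + 1) - d, by omega, by omega, key _ ?_ (by omega) (by omega)⟩
      rw [show y + P n m - P n (m + 1) - d + d = y + P n m - P n (m + 1) by omega]
      exact Nat.dvd_sub (((P_dvd (by omega)).trans hy3).add dvd_rfl) (P_dvd (by omega))

/-! ### Lower bound -/

/-- Synchronisation: an occurrence at `r` of the word at a multiple `q` of `P n (m+1)`, with length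
at least `P n m + 1`, is aligned modulo `P n m`. -/
lemma sync (hn : ∀ k, 2 ≤ n k) (ha : ∀ k, a k ≠ a (k + 1)) {m q r : ℕ} (hq : P n (m + 1) ∣ q)
    (h : ∀ i, i ≤ P n m → x a n (r + i) = x a n (q + i)) : P n m ∣ r := by
  suffices ∀ l, l ≤ m → P n l ∣ r from this m le_rfl
  intro l
  induction l with
  | zero => intro _; simp [P_zero]
  | succ l ih =>
    intro hl
    have hr := ih (by omega)
    by_contra hnd
    -- The position `q + P n (l+1)` has level `l+1`, while `r + P n (l+1)` has level `l`.
    have e1 : x a n (q + P n (l + 1)) = a (l + 1) := by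
      refine x_eq (((P_dvd (by omega)).trans hq).add dvd_rfl) fun hd => ?_
      have := Nat.le_of_dvd (P_pos hn _) ((Nat.dvd_add_right ((P_dvd (by omega)).trans hq)).1 hd)
      have := two_P_le hn (le_refl (l + 1 + 1))
      have := P_pos hn (l + 1)
      omega
    have e2 : x a n (r + P n (l + 1)) = a l :=
      x_eq (hr.add (P_dvd (by omega))) fun hd => hnd ((Nat.dvd_add_left dvd_rfl).1 hd)
    exact ha l (by rw [← e2, ← e1, h _ (P_le hn hl)])

/-- Let `q = P n (K+1) + P n K`, a position of level `K`. If the word of length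
`P n (m+1) - P n m + 1` at `q` also occurs at some `r > P n (K+1) - P n K`, then `r` is a multiple
of `P n m` and the run of letters `a m` which it sees at levels `≥ m` extends to `q` or beyond. -/
lemma occ (hn : ∀ k, 2 ≤ n k) (ha : ∀ k, a k ≠ a (k + 1)) {m K r : ℕ} (hmK : m + 2 ≤ K)
    (haK : a K = a m) (hnew : ∀ j, m + 1 ≤ j → j < K → a j ≠ a m)
    (hr : P n (K + 1) < r + P n K)
    (h : ∀ i, i + P n m ≤ P n (m + 1) → x a n (r + i) = x a n (P n (K + 1) + P n K + i)) :
    P n m ∣ r ∧ P n (K + 1) + P n K + P n m ≤ r + P n (m + 1) := by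
  have hPm : 2 * P n m ≤ P n (m + 1) := two_P_le hn le_rfl
  have hposm := P_pos hn m
  have hposK := P_pos hn K
  have h2K : 2 * P n K ≤ P n (K + 1) := two_P_le hn le_rfl
  have hq : P n (m + 1) ∣ P n (K + 1) + P n K := (P_dvd (by omega)).add (P_dvd (by omega))
  have hq' : P n K ∣ P n (K + 1) + P n K := (P_dvd (by omega)).add dvd_rfl
  have hrm : P n m ∣ r := sync hn ha hq fun i hi => h i (by omega)
  refine ⟨hrm, ?_⟩
  -- `y` is the first multiple of `P n (m+1)` from `r` on; being a multiple of `P n m`, it lies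
  -- inside the compared word.
  obtain ⟨y, hy1, hy2, hy3⟩ := exists_modEq (P_pos hn (m + 1)) r 0
  have hyd : P n (m + 1) ∣ y := (Nat.modEq_zero_iff_dvd).1 hy3.symm
  have hym : P n m ∣ y := (P_dvd (by omega)).trans hyd
  obtain ⟨i, rfl⟩ : ∃ i, y = r + i := ⟨y - r, by omega⟩
  have him : P n m ∣ i := (Nat.dvd_add_right hrm).1 hym
  have hi : i + P n m ≤ P n (m + 1) := by
    obtain ⟨c, rfl⟩ := him
    have hc : c < n m := by
      by_contra hcn
      have := Nat.mul_le_mul_left (P n m) (not_lt.1 hcn)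
      rw [← P_succ] at this
      omega
    have := Nat.mul_le_mul_left (P n m) hc
    rw [← P_succ, Nat.succ_eq_add_one, Nat.mul_add] at this
    omega
  have hxq : x a n (P n (K + 1) + P n K + i) = a m := by
    by_cases hi0 : i = 0
    · subst hi0
      rw [← haK]
      refine x_eq hq' fun hd => ?_
      have := Nat.le_of_dvd hposK ((Nat.dvd_add_right dvd_rfl).1 hd)
      omega
    · refine x_eq (((P_dvd (by omega)).trans hq).add him) fun hd => ?_
      have := Nat.le_of_dvd (by omega) ((Nat.dvd_add_right hq).1 hd)
      omega
  obtain ⟨j, hj1, hj2, hj3⟩ := exists_lev hn (t := r + i) (by omega) (m + 1) hyd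
  have hxr := h i hi
  rw [hxq, x_eq hj2 hj3] at hxr
  have hjK : K ≤ j := by
    by_contra hlt
    exact hnew j hj1 (by omega) hxr
  have hKd : P n K ∣ r + i := (P_dvd hjK).trans hj2
  have hne : r + i ≠ P n (K + 1) := by
    intro he
    have : x a n (r + i) = a (K + 1) := by
      rw [he]
      refine x_eq dvd_rfl fun hd => ?_
      have := Nat.le_of_dvd (P_pos hn _) hd
      have := two_P_le hn (le_refl (K + 1 + 1))
      omega
    rw [x_eq hj2 hj3, hxr, ← haK] at this
    exact ha K this
  have hge : P n (K + 1) + P n K ≤ r + i := by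
    by_contra hlt
    exact hne (dvd_unique hKd (P_dvd (by omega)) (by omega) (by omega))
  omega

/-- Lower bound for `L ≥ |p m| - |p (m-1)| + 1`. -/
lemma lower_short (hn : ∀ k, 2 ≤ n k) (ha : ∀ k, a k ≠ a (k + 1)) {m K L : ℕ} (hmK : m + 2 ≤ K)
    (haK : a K = a m) (hnew : ∀ j, m + 1 ≤ j → j < K → a j ≠ a m)
    (hL : P n (m + 1) + 1 ≤ L + P n m) :
    ∃ s q, ∀ r, s ≤ r → r + P n (m + 1) + 1 < s + 2 * P n K + P n m →
      X a n r L ≠ X a n q L := by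
  have h2K : 2 * P n K ≤ P n (K + 1) := two_P_le hn le_rfl
  have hposK := P_pos hn K
  refine ⟨P n (K + 1) - P n K, P n (K + 1) + P n K - 1, fun r h1 h2 he => ?_⟩
  rw [X_eq_iff] at he
  have := occ hn ha (r := r + 1) hmK haK hnew (by omega) fun i hi => by
    have := he (1 + i) (by omega) (by omega)
    rwa [show P n (K + 1) + P n K - 1 + (1 + i) = P n (K + 1) + P n K + i by omega,
      ← add_assoc] at this
  omega

/-- Lower bound for `L ≥ |p m| + 2`. -/
lemma lower_long (hn : ∀ k, 2 ≤ n k) (ha : ∀ k, a k ≠ a (k + 1)) {m K L : ℕ} (hmK : m + 2 ≤ K)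
    (haK : a K = a m) (hnew : ∀ j, m + 1 ≤ j → j < K → a j ≠ a m)
    (hL : P n (m + 1) + 1 ≤ L) :
    ∃ s q, ∀ r, s ≤ r → r + 1 < s + 2 * P n K → X a n r L ≠ X a n q L := by
  have h2K : 2 * P n K ≤ P n (K + 1) := two_P_le hn le_rfl
  have hposK := P_pos hn K
  have hposm := P_pos hn m
  have hposm' := P_pos hn (m + 1)
  refine ⟨P n (K + 1) - P n K, P n (K + 1) + P n K - 1, fun r h1 h2 he => ?_⟩
  rw [X_eq_iff] at he
  have he' : ∀ i, i ≤ P n (m + 1) → x a n (r + 1 + i) = x a n (P n (K + 1) + P n K + i) := by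
    intro i hi
    have := he (1 + i) (by omega) (by omega)
    rwa [show P n (K + 1) + P n K - 1 + (1 + i) = P n (K + 1) + P n K + i by omega,
      ← add_assoc] at this
  obtain ⟨hd, hle⟩ := occ hn ha (r := r + 1) hmK haK hnew (by omega) fun i hi => he' i (by omega)
  -- The run of `a m` around `q` is left only at `q + P n (m+1)`, which has level `m+1`.
  have hq : P n (m + 1 + 1) ∣ P n (K + 1) + P n K := (P_dvd (by omega)).add (P_dvd (by omega))
  have hq1 : P n (m + 1) ∣ P n (K + 1) + P n K := (P_dvd (by omega)).trans hq
  have e1 : x a n (P n (K + 1) + P n K + P n (m + 1)) = a (m + 1) := by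
    refine x_eq (hq1.add dvd_rfl) fun h => ?_
    have := Nat.le_of_dvd hposm' ((Nat.dvd_add_right hq).1 h)
    have := two_P_le hn (le_refl (m + 1 + 1))
    omega
  have e2 : x a n (r + 1 + P n (m + 1)) = a m := by
    refine x_eq (hd.add (P_dvd (by omega))) fun h => ?_
    have := dvd_unique h hq1 (by omega) (by omega)
    omega
  exact ha m (by rw [← e2, ← e1, he' _ le_rfl])

/-! ### The sequences `K` and `m` -/

/-- The defining set of `Kf a k`, read as a covering condition. -/
lemma Kf_set (k : ℕ) :
    {j | k < j ∧ {y | ∃ i, k + 1 ≤ i ∧ i ≤ j ∧ a i = y} = Ak a (k + 1)} =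
      {j | k < j ∧ ∀ l, k + 1 ≤ l → ∃ i, k + 1 ≤ i ∧ i ≤ j ∧ a i = a l} := by
  ext j
  simp only [Set.mem_ofPred_eq, and_congr_right_iff]
  intro _
  constructor
  · intro h l hl
    have : a l ∈ Ak a (k + 1) := ⟨l, hl, rfl⟩
    rw [← h] at this
    exact this
  · intro h
    ext y
    constructor
    · rintro ⟨i, h1, -, rfl⟩
      exact ⟨i, h1, rfl⟩
    · rintro ⟨l, hl, rfl⟩
      exact h l hl

lemma Kf_spec [Finite A] (k : ℕ) :
    k < Kf a k ∧ ∀ l, k + 1 ≤ l → ∃ i, k + 1 ≤ i ∧ i ≤ Kf a k ∧ a i = a l := by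
  have hne : {j | k < j ∧ ∀ l, k + 1 ≤ l → ∃ i, k + 1 ≤ i ∧ i ≤ j ∧ a i = a l}.Nonempty := by
    classical
    have h : ∀ y : A, ∃ B, ∀ l, k + 1 ≤ l → a l = y → ∃ i, k + 1 ≤ i ∧ i ≤ B ∧ a i = y := by
      intro y
      by_cases hy : ∃ i, k + 1 ≤ i ∧ a i = y
      · obtain ⟨i, hi1, hi2⟩ := hy
        exact ⟨i, fun _ _ _ => ⟨i, hi1, le_rfl, hi2⟩⟩
      · exact ⟨0, fun l h1 h2 => absurd ⟨l, h1, h2⟩ hy⟩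
    choose B hB using h
    obtain ⟨C, hC⟩ := (Set.finite_range B).bddAbove
    refine ⟨C + k + 1, by omega, fun l hl => ?_⟩
    obtain ⟨i, h1, h2, h3⟩ := hB (a l) l hl rfl
    have : B (a l) ≤ C := hC ⟨_, rfl⟩
    exact ⟨i, h1, by omega, h3⟩
  have := Nat.sInf_mem hne
  rwa [← Kf_set, ← Kf, Kf_set] at this

lemma Kf_le {k j : ℕ} (h1 : k < j)
    (h2 : ∀ l, k + 1 ≤ l → ∃ i, k + 1 ≤ i ∧ i ≤ j ∧ a i = a l) : Kf a k ≤ j := by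
  rw [Kf, Kf_set]
  exact Nat.sInf_le ⟨h1, h2⟩

lemma Kf_ge [Finite A] (ha : ∀ k, a k ≠ a (k + 1)) (k : ℕ) : k + 2 ≤ Kf a k := by
  obtain ⟨h1, h2⟩ := Kf_spec (a := a) k
  by_contra hlt
  have hK : Kf a k = k + 1 := by omega
  obtain ⟨i, hi1, hi2, hi3⟩ := h2 (k + 1 + 1) (by omega)
  obtain rfl : i = k + 1 := by omega
  exact ha _ hi3

lemma mseq_spec [Finite A] (ha : ∀ k, a k ≠ a (k + 1)) (i : ℕ) :
    mseq a i < mseq a (i + 1) ∧ Kf a (mseq a i) < Kf a (mseq a (i + 1)) ∧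
      Kf a (mseq a (i + 1) - 1) ≤ Kf a (mseq a i) := by
  have hne : {j | mseq a i < j ∧ Kf a (mseq a i) < Kf a j}.Nonempty := by
    refine ⟨mseq a i + Kf a (mseq a i) + 1, by omega, ?_⟩
    have := Kf_ge ha (mseq a i + Kf a (mseq a i) + 1)
    omega
  have hmem : mseq a (i + 1) ∈ {j | mseq a i < j ∧ Kf a (mseq a i) < Kf a j} := by
    rw [mseq]; exact Nat.sInf_mem hne
  refine ⟨hmem.1, hmem.2, ?_⟩
  by_contra hlt
  have h1 := hmem.1
  by_cases he : mseq a (i + 1) - 1 = mseq a i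
  · rw [he] at hlt; omega
  · have : mseq a (i + 1) ≤ mseq a (i + 1) - 1 := by
      conv_lhs => rw [mseq]
      exact Nat.sInf_le ⟨by omega, by omega⟩
    omega

/-- Where `Kf` jumps, the letter `a m` is the one completing the alphabet: it reappears for the
first time at index `Kf a m`. -/
lemma jump [Finite A] (ha : ∀ k, a k ≠ a (k + 1)) {m : ℕ} (hm : 1 ≤ m)
    (hK : Kf a (m - 1) < Kf a m) :
    a (Kf a m) = a m ∧ ∀ j, m + 1 ≤ j → j < Kf a m → a j ≠ a m := by
  obtain ⟨-, hcov⟩ := Kf_spec (a := a) (m - 1)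
  rw [show m - 1 + 1 = m by omega] at hcov
  obtain ⟨-, hcov'⟩ := Kf_spec (a := a) m
  have hge := Kf_ge ha m
  constructor
  · by_contra hne
    have : Kf a m ≤ Kf a m - 1 := by
      refine Kf_le (by omega) fun l hl => ?_
      by_cases hlm : a l = a m
      · obtain ⟨i, h1, h2, h3⟩ := hcov' l hl
        have : i ≠ Kf a m := by rintro rfl; exact hne (h3.trans hlm)
        exact ⟨i, h1, by omega, h3⟩
      · obtain ⟨i, h1, h2, h3⟩ := hcov l (by omega)
        have : i ≠ m := by rintro rfl; exact hlm h3.symm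
        exact ⟨i, by omega, by omega, h3⟩
    omega
  · intro j hj1 hj2 he
    have : Kf a m ≤ Kf a m - 1 := by
      refine Kf_le (by omega) fun l hl => ?_
      obtain ⟨i, h1, h2, h3⟩ := hcov l (by omega)
      by_cases him : i = m
      · subst him
        exact ⟨j, hj1, by omega, he.trans h3⟩
      · exact ⟨i, by omega, by omega, h3⟩
    omega

end

end Toep

/-- the repetitivity function on the range
`|p (m i)| - |p (m i - 1)| + 1 ≤ L ≤ |p (m (i+1))| - |p (m (i+1) - 1)|` for `i ≥ 1`. -/
theorem stmt16 {A : Type*} [Fintype A] [Nonempty A]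
    (a : ℕ → A) (n : ℕ → ℕ) (hn : ∀ k, 2 ≤ n k) (ha : ∀ k, a k ≠ a (k + 1))
    (hAev : 2 ≤ (Aev a).ncard)
    (i : ℕ) (hi : 1 ≤ i) (L : ℕ)
    (hL1 : (ToeplitzBlock a n (mseq a i)).length + 1 ≤
      L + (ToeplitzBlock a n (mseq a i - 1)).length)
    (hL2 : L + (ToeplitzBlock a n (mseq a (i + 1) - 1)).length ≤
      (ToeplitzBlock a n (mseq a (i + 1))).length) :
    (L ≤ (ToeplitzBlock a n (mseq a i)).length + 1 →
      (repet a n L : ℤ) =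
        2 * ((ToeplitzBlock a n (Kf a (mseq a i) - 1)).length : ℤ) + 1
          - ((ToeplitzBlock a n (mseq a i)).length : ℤ)
          + ((ToeplitzBlock a n (mseq a i - 1)).length : ℤ) + (L : ℤ)) ∧
    ((ToeplitzBlock a n (mseq a i)).length + 2 ≤ L →
      (repet a n L : ℤ) =
        2 * ((ToeplitzBlock a n (Kf a (mseq a i) - 1)).length : ℤ) + 1 + (L : ℤ)) := by
  obtain ⟨i, rfl⟩ : ∃ i', i = i' + 1 := ⟨i - 1, by omega⟩
  obtain ⟨hm1, hK1, hK1'⟩ := Toep.mseq_spec ha i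
  obtain ⟨hm2, -, hK2⟩ := Toep.mseq_spec ha (i + 1)
  obtain ⟨-, hcovM⟩ := Toep.Kf_spec (a := a) (mseq a (i + 1 + 1) - 1)
  have hgeM := Toep.Kf_ge ha (mseq a (i + 1 + 1) - 1)
  obtain ⟨haK, hnew⟩ := Toep.jump ha (m := mseq a (i + 1)) (by omega) (by omega)
  obtain ⟨-, hcov⟩ := Toep.Kf_spec (a := a) (mseq a (i + 1))
  have hmK := Toep.Kf_ge ha (mseq a (i + 1))
  generalize mseq a (i + 1 + 1) = M at *
  generalize mseq a (i + 1) = m at *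
  generalize Kf a m = K at *
  have b1 := Toep.block_length (a := a) hn m
  have b2 := Toep.block_length (a := a) hn (m - 1)
  have b3 := Toep.block_length (a := a) hn M
  have b4 := Toep.block_length (a := a) hn (M - 1)
  have b5 := Toep.block_length (a := a) hn (K - 1)
  rw [show m - 1 + 1 = m by omega] at b2
  rw [show M - 1 + 1 = M by omega] at b4 hcovM
  rw [show K - 1 + 1 = K by omega] at b5
  have hPK := Toep.two_P_le hn hmK
  have hpos := Toep.P_pos hn m
  have hPm := Toep.two_P_le hn (le_refl (m + 1))
  constructor
  · intro hL
    have hR := Toep.repet_eq (a := a) hn L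
      (2 * Toep.P n K - 1 + Toep.P n m - Toep.P n (m + 1))
      (fun s q => by
        obtain ⟨r, h1, h2, h3⟩ := Toep.upper_short (a := a) hn hmK haK hcov
          (L := L) (by omega) s q
        exact ⟨r, h1, by omega, h3⟩)
      (by
        obtain ⟨s, q, h⟩ := Toep.lower_short (a := a) hn ha (L := L) hmK haK hnew (by omega)
        exact ⟨s, q, fun r h1 h2 => h r h1 (by omega)⟩)
    omega
  · intro hL
    have hR := Toep.repet_eq (a := a) hn L (2 * Toep.P n K - 1)
      (fun s q => by
        obtain ⟨r, h1, h2, h3⟩ := Toep.upper_long (a := a) hn (M := M) (K := K) (L := L)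
          (by omega)
          (fun j hj => by
            obtain ⟨i, h1, h2, h3⟩ := hcovM j hj
            exact ⟨i, h1, by omega, h3⟩)
          (by omega) s q
        exact ⟨r, h1, by omega, h3⟩)
      (by
        obtain ⟨s, q, h⟩ := Toep.lower_long (a := a) hn ha (L := L) hmK haK hnew (by omega)
        exact ⟨s, q, fun r h1 h2 => h r h1 (by omega)⟩)
    omega
end

section
/- Let α ≥ 1 be a real number. Then 0 < limsup_{L→∞} R(L)/L^α < ∞ holds if and only if 0 < limsup_{i→∞} (|p_{K(m_i) − 1}| + 1) / (|p_{m_i}| + 1)^α < ∞ holds (all quotients regarded as real numbers, and limsup taken along the atTop filter). -/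
/-!
Write `N k = |p k| + 1 = n 0 ⋯ n k`. The block `p k` is the prefix of length `N k - 1` of the
Toeplitz sequence whose letter at position `x ≥ 1` is `a j`, where `j` is the least index with
`¬ N j ∣ x` (the level of `x`, `block_eq_window`); hence the language consists of the factors of
this sequence. The repetitivity function `R` is estimated from both sides for every `k`, with
`K = Kf a k`:

* `R L ≤ 4 N (K-1)` for `L ≤ N (k+1) - N k` (`repet_le`). A word of such a length contains at most
  one position of level at least `k + 2`. Either it is a factor of `p (k+1)`, or it is determined
  by its exceptional letter, which occurs among `a (k+2), …, a K`; any window of length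
  `4 N (K-1)` contains positions of all the levels `k + 2, …, K` with sufficient margin.
* `N (K-1) ≤ R (2 N k - 1)` (`le_repet`). The word `p k (a K) p k` can occur only at positions
  aligned with `N k` (`per_dvd_of_window_eq`, from `a j ≠ a (j+1)`), and by minimality of `K` no
  aligned occurrence lies in `p (K-1)`.

The intervals `(N k - N (k-1), N (k+1) - N k]` cover all large `L`, and `N k ≤ 2 L` on each of
them. Therefore `R L / L ^ α` and `N (K k - 1) / (N k) ^ α` dominate each other up to
multiplicative constants along indices tending to infinity. Since `Kf` is constant on
`[m i, m (i+1))`, the second quotient may be restricted to `k = m i`. Mutual domination preserves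
both finiteness and positivity of the limsup (`bounded_and_limsup_pos_iff`).
-/

open Filter

namespace SimpleToeplitz

variable {A : Type*}

/-! ### The Toeplitz sequence and its periods -/

/-- `per n k = n 0 ⋯ n (k-1)`, so that `per n (k+1) = |p k| + 1`. -/
def per (n : ℕ → ℕ) : ℕ → ℕ
  | 0 => 1
  | k + 1 => per n k * n k

/-- The level of a position `x > 0`: the unique `j` with `per n j ∣ x` and `¬ per n (j+1) ∣ x`.
At `x = 0` it takes the junk value `0`. -/
noncomputable def level (n : ℕ → ℕ) (x : ℕ) : ℕ := sInf {j | ¬ per n (j + 1) ∣ x}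

/-- The one-sided Toeplitz sequence: position `x ≥ 1` carries the letter of its level. -/
noncomputable def toep (a : ℕ → A) (n : ℕ → ℕ) (x : ℕ) : A := a (level n x)

/-- The factor of the Toeplitz sequence at the positions `s + 1, …, s + L`. -/
noncomputable def window (a : ℕ → A) (n : ℕ → ℕ) (s L : ℕ) : List A :=
  (List.range' (s + 1) L).map (toep a n)

section Levels

variable {n : ℕ → ℕ}

lemma per_dvd {i j : ℕ} (h : i ≤ j) : per n i ∣ per n j := by
  induction h with
  | refl => exact dvd_rfl
  | step _ ih => exact ih.trans (Dvd.intro _ rfl)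

lemma per_pos (hn : ∀ k, 2 ≤ n k) (k : ℕ) : 0 < per n k := by
  induction k with
  | zero => simp [per]
  | succ k ih => exact Nat.mul_pos ih (by have := hn k; omega)

lemma two_mul_per_le (hn : ∀ k, 2 ≤ n k) (k : ℕ) : 2 * per n k ≤ per n (k + 1) := by
  rw [mul_comm]; exact Nat.mul_le_mul_left _ (hn k)

lemma per_strictMono (hn : ∀ k, 2 ≤ n k) : StrictMono (per n) := by
  refine strictMono_nat_of_lt_succ fun k => ?_
  have := two_mul_per_le hn k
  have := per_pos hn k
  omega

lemma lt_per (hn : ∀ k, 2 ≤ n k) (k : ℕ) : k < per n k := by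
  induction k with
  | zero => simp [per]
  | succ k ih => have := two_mul_per_le hn k; omega

lemma not_per_succ_dvd_per (hn : ∀ k, 2 ≤ n k) (k : ℕ) : ¬ per n (k + 1) ∣ per n k := fun h =>
  absurd (Nat.le_of_dvd (per_pos hn k) h) (not_le.2 (per_strictMono hn k.lt_succ_self))

lemma level_spec (hn : ∀ k, 2 ≤ n k) {x : ℕ} (hx : 0 < x) :
    per n (level n x) ∣ x ∧ ¬ per n (level n x + 1) ∣ x := by
  have hne : {j | ¬ per n (j + 1) ∣ x}.Nonempty := by
    refine ⟨x, fun h => ?_⟩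
    have := Nat.le_of_dvd hx h
    have := lt_per hn (x + 1)
    omega
  refine ⟨?_, Nat.sInf_mem hne⟩
  rcases h : level n x with _ | j
  · simp [per]
  · by_contra hc
    have : level n x ≤ j := Nat.sInf_le hc
    omega

lemma le_level (hn : ∀ k, 2 ≤ n k) {x j : ℕ} (hx : 0 < x) (h : per n j ∣ x) : j ≤ level n x := by
  by_contra hc
  exact (level_spec hn hx).2 ((per_dvd (by omega)).trans h)

lemma level_lt (hn : ∀ k, 2 ≤ n k) {x j : ℕ} (hx : 0 < x) (h : ¬ per n j ∣ x) : level n x < j := by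
  by_contra hc
  exact h ((per_dvd (by omega)).trans (level_spec hn hx).1)

lemma level_eq (hn : ∀ k, 2 ≤ n k)
    {x j : ℕ} (h1 : per n j ∣ x) (h2 : ¬ per n (j + 1) ∣ x) : level n x = j := by
  have hx : 0 < x := Nat.pos_of_ne_zero (by rintro rfl; exact h2 (dvd_zero _))
  have := le_level hn hx h1
  have := level_lt hn hx h2
  omega

/-- Levels below `j` are determined by the residue modulo `per n j`. -/
lemma level_congr (hn : ∀ k, 2 ≤ n k) {x y j : ℕ} (h : x ≡ y [MOD per n j]) (hx : ¬ per n j ∣ x) :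
    level n x = level n y := by
  have hx0 : 0 < x := Nat.pos_of_ne_zero (by rintro rfl; exact hx (dvd_zero _))
  have hl := level_lt hn hx0 hx
  obtain ⟨h1, h2⟩ := level_spec hn hx0
  refine (level_eq hn ?_ ?_).symm
  · exact (h.dvd_iff (per_dvd hl.le)).1 h1
  · exact fun hc => h2 ((h.dvd_iff (per_dvd hl)).2 hc)

lemma exists_level_of_length (hn : ∀ k, 2 ≤ n k)
    (L : ℕ) : ∃ k, L + per n (k + 1) ≤ per n (k + 2) := by
  refine ⟨L, ?_⟩
  have : 2 * per n (L + 1) ≤ per n (L + 2) := two_mul_per_le hn _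
  have := lt_per hn (L + 1)
  omega

end Levels

/-! ### Windows, blocks and the language -/

section Windows

variable (a : ℕ → A) (n : ℕ → ℕ)

@[simp] lemma length_window (s L : ℕ) : (window a n s L).length = L := by simp [window]

lemma window_append (s L L' : ℕ) :
    window a n s (L + L') = window a n s L ++ window a n (s + L) L' := by
  have h := List.range'_append (s := s + 1) (m := L) (n := L') (step := 1)
  rw [window, ← h, List.map_append, window, window]
  congr 3
  ring

lemma window_eq_iff (s t L : ℕ) : window a n s L = window a n t L ↔
    ∀ i, 0 < i → i ≤ L → toep a n (s + i) = toep a n (t + i) := by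
  constructor
  · intro h i h0 hi
    have := congrArg (fun l => l[i - 1]?) h
    simp only [window, List.getElem?_map] at this
    rw [List.getElem?_range' (by omega), List.getElem?_range' (by omega)] at this
    simp only [Option.map_some, Option.some.injEq] at this
    convert this using 2 <;> omega
  · intro h
    refine List.ext_getElem (by simp) fun i h1 h2 => ?_
    simp only [length_window] at h1
    simp only [window, List.getElem_map, List.getElem_range']
    have := h (i + 1) (by omega) (by omega)
    convert this using 2 <;> ring

lemma window_infix {s L s' L' : ℕ} (h1 : s ≤ s') (h2 : s' + L' ≤ s + L) :
    window a n s' L' <:+: window a n s L := by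
  obtain ⟨d, rfl⟩ := Nat.exists_eq_add_of_le h1
  obtain ⟨e, he⟩ := Nat.exists_eq_add_of_le h2
  have : L = d + L' + e := by omega
  subst this
  rw [window_append, window_append]
  exact ⟨_, _, rfl⟩

lemma exists_of_infix_window {s L : ℕ} {u : List A} (h : u <:+: window a n s L) :
    ∃ s', s ≤ s' ∧ s' + u.length ≤ s + L ∧ u = window a n s' u.length := by
  obtain ⟨x, y, hxy⟩ := h
  have hl := congrArg List.length hxy
  simp only [List.length_append, length_window] at hl
  subst hl
  rw [window_append, window_append] at hxy
  obtain ⟨h1, -⟩ := List.append_inj hxy (by simp)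
  obtain ⟨-, h2⟩ := List.append_inj h1 (by simp)
  exact ⟨s + x.length, by omega, by omega, h2⟩

variable {n}

/-- The case of `m` copies of `p k` starting after the position `t * per n (k+1)`, by induction
on `m`. -/
lemma intercalate_eq_window (hn : ∀ k, 2 ≤ n k)
    (k : ℕ) (hk : ToeplitzBlock a n k = window a n 0 (per n (k + 1) - 1))
    (m : ℕ) : ∀ t, t + (m + 1) ≤ n (k + 1) →
    List.intercalate [a (k + 1)] (List.replicate (m + 1) (ToeplitzBlock a n k)) =
      window a n (t * per n (k + 1)) ((m + 1) * per n (k + 1) - 1) := by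
  have hp := per_pos hn (k + 1)
  have hblock : ∀ t, ToeplitzBlock a n k =
      window a n (t * per n (k + 1)) (per n (k + 1) - 1) := by
    intro t
    rw [hk, window_eq_iff]
    intro i h0 hi
    refine congrArg a (level_congr hn (j := k + 1) ?_ ?_)
    · simp [Nat.ModEq]
    · rw [zero_add]; exact Nat.not_dvd_of_pos_of_lt h0 (by omega)
  induction m with
  | zero =>
    intro t _
    simpa [List.intercalate] using hblock t
  | succ m ih =>
    intro t ht
    have hlen : (m + 1 + 1) * per n (k + 1) - 1 =
        (per n (k + 1) - 1) + (1 + ((m + 1) * per n (k + 1) - 1)) := by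
      have : (m + 1 + 1) * per n (k + 1) = (m + 1) * per n (k + 1) + per n (k + 1) := by ring
      have : 0 < (m + 1) * per n (k + 1) := by positivity
      omega
    have hpos : t * per n (k + 1) + (per n (k + 1) - 1) + 1 = (t + 1) * per n (k + 1) := by
      rw [add_mul]; omega
    have hsplit : List.intercalate [a (k + 1)]
        (List.replicate (m + 1 + 1) (ToeplitzBlock a n k)) =
        ToeplitzBlock a n k ++ ([a (k + 1)] ++
          List.intercalate [a (k + 1)] (List.replicate (m + 1) (ToeplitzBlock a n k))) := by
      simp [List.intercalate, List.replicate_succ]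
    have hletter : window a n (t * per n (k + 1) + (per n (k + 1) - 1)) 1 = [a (k + 1)] := by
      simp only [window, List.range'_one, List.map_cons, List.map_nil]
      rw [hpos]
      refine congrArg (fun j => [a j]) (level_eq hn (Dvd.intro_left _ rfl) fun hd => ?_)
      have hle := Nat.le_of_dvd (by positivity) hd
      have : (t + 1) * per n (k + 1) < per n (k + 1 + 1) := by
        rw [per, mul_comm]
        exact Nat.mul_lt_mul_of_pos_left (by omega) hp
      omega
    rw [hsplit, hlen, window_append, window_append, hletter, hpos, ← hblock t,
      ih (t + 1) (by omega)]

lemma block_eq_window (hn : ∀ k, 2 ≤ n k)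
    (k : ℕ) : ToeplitzBlock a n k = window a n 0 (per n (k + 1) - 1) := by
  induction k with
  | zero =>
    rw [ToeplitzBlock, eq_comm, List.eq_replicate_iff]
    refine ⟨by simp [per], fun b hb => ?_⟩
    simp only [window, List.mem_map, List.mem_range'_1] at hb
    obtain ⟨x, ⟨h1, h2⟩, rfl⟩ := hb
    refine congrArg a (level_eq hn (by simp [per]) ?_)
    exact Nat.not_dvd_of_pos_of_lt (by omega) (by omega)
  | succ k ih =>
    have h2 := hn (k + 1)
    obtain ⟨m, hm⟩ : ∃ m, n (k + 1) = m + 1 := ⟨n (k + 1) - 1, by omega⟩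
    have := intercalate_eq_window a hn k ih m 0 (by omega)
    rw [ToeplitzBlock, hm, this, ← hm, zero_mul, mul_comm]
    rfl

lemma length_block (hn : ∀ k, 2 ≤ n k)
    (k : ℕ) : (ToeplitzBlock a n k).length + 1 = per n (k + 1) := by
  have := per_pos hn (k + 1)
  rw [block_eq_window a hn, length_window]
  omega

lemma window_mem_lang (hn : ∀ k, 2 ≤ n k) (s L : ℕ) : window a n s L ∈ ToeplitzLang a n := by
  refine ⟨s + L, ?_⟩
  rw [block_eq_window a hn]
  have := lt_per hn (s + L + 1)
  exact window_infix a n (Nat.zero_le _) (by omega)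

lemma exists_window_of_mem_lang (hn : ∀ k, 2 ≤ n k) {u : List A} (hu : u ∈ ToeplitzLang a n) :
    ∃ s, u = window a n s u.length := by
  obtain ⟨k, hk⟩ := hu
  rw [block_eq_window a hn] at hk
  obtain ⟨s, -, -, h⟩ := exists_of_infix_window a n hk
  exact ⟨s, h⟩

end Windows

/-! ### The functions `Kf` and `mseq` -/

section Kf

variable (a : ℕ → A)

lemma Kf_le {k j : ℕ} (hj : k < j) (h : ∀ x ∈ Ak a (k + 1), ∃ i, k + 1 ≤ i ∧ i ≤ j ∧ a i = x) :
    Kf a k ≤ j := by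
  refine Nat.sInf_le ⟨hj, Set.Subset.antisymm ?_ h⟩
  rintro x ⟨i, h1, -, rfl⟩
  exact ⟨i, h1, rfl⟩

variable [Finite A]

lemma Kf_spec (k : ℕ) : k < Kf a k ∧
    ∀ x ∈ Ak a (k + 1), ∃ i, k + 1 ≤ i ∧ i ≤ Kf a k ∧ a i = x := by
  have hne : {j | k < j ∧
      {x | ∃ i, k + 1 ≤ i ∧ i ≤ j ∧ a i = x} = Ak a (k + 1)}.Nonempty := by
    have hf : ∀ x : A, ∃ j, x ∈ Ak a (k + 1) → k + 1 ≤ j ∧ a j = x := by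
      intro x
      by_cases hx : x ∈ Ak a (k + 1)
      · obtain ⟨j, hj⟩ := hx
        exact ⟨j, fun _ => hj⟩
      · exact ⟨0, fun h => absurd h hx⟩
    choose f hf using hf
    obtain ⟨B, hB⟩ := (Set.finite_range f).bddAbove
    refine ⟨max B (k + 1), by simp, Set.Subset.antisymm ?_ ?_⟩
    · rintro x ⟨i, h1, -, rfl⟩
      exact ⟨i, h1, rfl⟩
    · intro x hx
      exact ⟨f x, (hf x hx).1, le_max_of_le_left (hB ⟨x, rfl⟩), (hf x hx).2⟩
  obtain ⟨h1, h2⟩ := Nat.sInf_mem hne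
  exact ⟨h1, fun x hx => by rw [← h2] at hx; exact hx⟩

/-- The letter `a (Kf a k)` is the last letter of `A (k+1)` to appear: it is new at `Kf a k`. -/
lemma apply_ne_apply_Kf {k i : ℕ} (h1 : k + 1 ≤ i) (h2 : i < Kf a k) : a i ≠ a (Kf a k) := by
  intro he
  have : Kf a k ≤ Kf a k - 1 := by
    refine Kf_le a (by omega) fun x hx => ?_
    obtain ⟨j, hj1, hj2, rfl⟩ := (Kf_spec a k).2 x hx
    rcases hj2.lt_or_eq with h | rfl
    · exact ⟨j, hj1, by omega, rfl⟩
    · exact ⟨i, h1, by omega, he⟩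
  omega

lemma add_two_le_Kf (ha : ∀ k, a k ≠ a (k + 1)) (k : ℕ) : k + 2 ≤ Kf a k := by
  obtain ⟨h1, h2⟩ := Kf_spec a k
  by_contra hc
  obtain ⟨i, hi1, hi2, hi⟩ := h2 (a (k + 2)) ⟨k + 2, by omega, rfl⟩
  have : i = k + 1 := by omega
  subst this
  exact ha _ hi

lemma Kf_mono : Monotone (Kf a) := by
  refine monotone_nat_of_le_succ fun k => ?_
  obtain ⟨h1, h2⟩ := Kf_spec a (k + 1)
  refine Kf_le a (by omega) ?_
  rintro x ⟨j, hj, rfl⟩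
  rcases hj.lt_or_eq with h | rfl
  · obtain ⟨i, hi1, hi2, hi⟩ := h2 (a j) ⟨j, h, rfl⟩
    exact ⟨i, by omega, hi2, hi⟩
  · exact ⟨k + 1, le_rfl, by omega, rfl⟩

lemma mseq_nonempty (i : ℕ) : {j | mseq a i < j ∧ Kf a (mseq a i) < Kf a j}.Nonempty := by
  refine ⟨Kf a (mseq a i), (Kf_spec a _).1, (Kf_spec a _).1⟩

lemma mseq_strictMono : StrictMono (mseq a) :=
  strictMono_nat_of_lt_succ fun i => (Nat.sInf_mem (mseq_nonempty a i)).1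

/-- Every `k` lies in an interval `[m i, m (i+1))`, and `Kf` is constant there. -/
lemma exists_mseq (k : ℕ) : ∃ i, mseq a i ≤ k ∧ k < mseq a (i + 1) ∧
    Kf a k = Kf a (mseq a i) := by
  have hex : ∃ i, k < mseq a i := ⟨k + 1, (mseq_strictMono a).le_apply⟩
  classical
  rcases h : Nat.find hex with _ | i
  · have := Nat.find_spec hex
    rw [h] at this
    simp [mseq] at this
  · have h1 : k < mseq a (i + 1) := h ▸ Nat.find_spec hex
    have h2 : mseq a i ≤ k := not_lt.1 (Nat.find_min hex (by omega))
    refine ⟨i, h2, h1, le_antisymm ?_ (Kf_mono a h2)⟩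
    by_contra hc
    have hlt : mseq a i < k := by
      rcases h2.lt_or_eq with h | h
      · exact h
      · rw [h] at hc; exact absurd le_rfl hc
    have : mseq a (i + 1) ≤ k := Nat.sInf_le ⟨hlt, not_le.1 hc⟩
    omega

end Kf

/-! ### Two-sided estimate of the repetitivity function -/

section Repetitivity

variable {a : ℕ → A} {n : ℕ → ℕ}

/-- Recognizability: a word `p k b p k` of the language (here with centre `y`) occurs only at
positions aligned with the period `per n (k+1)`. -/
lemma per_dvd_of_window_eq (hn : ∀ k, 2 ≤ n k) (ha : ∀ k, a k ≠ a (k + 1))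
    {k y s : ℕ} (hy : per n (k + 1) ∣ y) (hy0 : 0 < y)
    (h : window a n (y - per n (k + 1)) (2 * per n (k + 1) - 1) =
      window a n s (2 * per n (k + 1) - 1)) : per n (k + 1) ∣ s := by
  rw [window_eq_iff] at h
  have hyle := Nat.le_of_dvd hy0 hy
  have hp := per_pos hn (k + 1)
  -- away from the centre, the word carries the letters of the Toeplitz sequence itself
  have hword : ∀ i, 0 < i → i < 2 * per n (k + 1) → ¬ per n (k + 1) ∣ i →
      toep a n (s + i) = a (level n i) := by
    intro i h0 hi hd
    rw [← h i h0 (by omega)]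
    refine congrArg a (level_congr hn (j := k + 1) ?_ hd).symm
    have : y - per n (k + 1) ≡ 0 [MOD per n (k + 1)] :=
      (Nat.modEq_zero_iff_dvd).2 (Nat.dvd_sub hy dvd_rfl)
    simpa using (this.add_right i).symm
  by_contra hs
  have hs0 : 0 < s := Nat.pos_of_ne_zero (by rintro rfl; exact hs (dvd_zero _))
  obtain ⟨hj1, hj2⟩ := level_spec hn hs0
  have hjk := level_lt hn hs0 hs
  generalize level n s = j at hj1 hj2 hjk
  rcases (Nat.lt_succ_iff.1 hjk).lt_or_eq with hlt | rfl
  · -- the first letter of level `j + 1` in the word would sit at a position of level `j`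
    have hlt' : per n (j + 1) < per n (k + 1) := per_strictMono hn (by omega)
    have h1 := hword (per n (j + 1)) (per_pos hn _) (by omega)
      (Nat.not_dvd_of_pos_of_lt (per_pos hn _) hlt')
    rw [level_eq hn dvd_rfl (not_per_succ_dvd_per hn (j + 1)), toep,
      level_eq hn (dvd_add hj1 (per_dvd (by omega)))
        (fun hc => hj2 ((Nat.dvd_add_left dvd_rfl).1 hc))] at h1
    exact ha j h1
  · -- the word would show the letter `a j` at two consecutive multiples of `per n (j+1)`,
    -- one of which has level `j + 1`
    set N := per n (j + 1) with hN
    have hmod := Nat.mod_lt s hp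
    have hmod0 : 0 < s % N := Nat.pos_of_ne_zero fun hc => hs (Nat.dvd_of_mod_eq_zero hc)
    set i := N - s % N with hi
    have hq : N ∣ s + i := by
      have := Nat.div_add_mod s N
      refine ⟨s / N + 1, ?_⟩
      rw [mul_add]
      omega
    have hiN : ¬ N ∣ i := Nat.not_dvd_of_pos_of_lt (by omega) (by omega)
    have hlev : level n i = j :=
      level_eq hn ((Nat.dvd_add_right hj1).1 ((per_dvd (by omega)).trans hq)) hiN
    have hiN' : ¬ N ∣ i + N := fun hc => hiN ((Nat.dvd_add_left dvd_rfl).1 hc)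
    have hlev' : level n (i + N) = j := by
      rw [← hlev]
      exact level_congr hn (j := j + 1) (by simp [Nat.ModEq, ← hN]) hiN'
    have h1 := hword i (by omega) (by omega) hiN
    have h2 := hword (i + N) (by omega) (by omega) hiN'
    rw [hlev] at h1
    rw [hlev'] at h2
    by_cases hd : per n (j + 2) ∣ s + i
    · have : ¬ per n (j + 2) ∣ s + (i + N) := by
        rw [← add_assoc, Nat.dvd_add_right hd]
        exact not_per_succ_dvd_per hn (j + 1)
      rw [toep, level_eq hn (j := j + 1) (by rw [← add_assoc]; exact dvd_add hq dvd_rfl) this] at h2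
      exact ha j h2.symm
    · rw [toep, level_eq hn (j := j + 1) hq hd] at h1
      exact ha j h1.symm

variable [Finite A]

/-- Every window of length `4 * per n (Kf a k)` contains every word of length at most
`per n (k+2) - per n (k+1)`. The word sees at most one position `y` of level at least `k + 2`.
If the letter there is `a (k+1)` (or there is no such position) it is a factor of `p (k+1)`;
otherwise the letter occurs as `a i` with `k + 2 ≤ i ≤ Kf a k`, and the word can be transported
to a position `z` of level `i`. -/
lemma window_infix_window (hn : ∀ k, 2 ≤ n k) (ha : ∀ k, a k ≠ a (k + 1))
    {k L : ℕ} (hL : L + per n (k + 1) ≤ per n (k + 2)) (x s : ℕ) :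
    window a n x L <:+: window a n s (4 * per n (Kf a k)) := by
  have hK := add_two_le_Kf a ha k
  set K := Kf a k with hKdef
  have hpK := per_pos hn K
  have hp1 := per_pos hn (k + 1)
  have hle : per n (k + 2) ≤ per n K := Nat.le_of_dvd hpK (per_dvd hK)
  -- `t` is a multiple of the period lying between one and two periods after `s`
  obtain ⟨t, ht1, ht2, htd⟩ : ∃ t, s + per n K ≤ t ∧ t < s + 2 * per n K ∧ per n K ∣ t := by
    refine ⟨(s + 2 * per n K - 1) / per n K * per n K, ?_, ?_, Dvd.intro_left _ rfl⟩
    · have := Nat.div_add_mod (s + 2 * per n K - 1) (per n K)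
      have := Nat.mod_lt (s + 2 * per n K - 1) hpK
      rw [mul_comm (per n K)] at *
      omega
    · have := Nat.div_mul_le_self (s + 2 * per n K - 1) (per n K)
      omega
  by_cases hcase : ∃ y, x < y ∧ y ≤ x + L ∧ per n (k + 2) ∣ y ∧ toep a n y ≠ a (k + 1)
  · obtain ⟨y, hy1, hy2, hyd, hya⟩ := hcase
    have hlev := le_level hn (by omega) hyd
    obtain ⟨i, hi1, hi2, hi⟩ := (Kf_spec a k).2 (toep a n y) ⟨level n y, by omega, rfl⟩
    have hi3 : k + 2 ≤ i := by
      rcases hi1.lt_or_eq with h | h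
      · exact h
      · rw [← h] at hi; exact absurd hi.symm hya
    rw [← hKdef] at hi2
    obtain ⟨z, hz1, hz2, hz⟩ :
        ∃ z, t ≤ z ∧ z ≤ t + per n K ∧ level n z = i := by
      rcases hi2.lt_or_eq with h | h
      · refine ⟨t + per n i, by omega, ?_, level_eq hn ?_ ?_⟩
        · have := Nat.le_of_dvd hpK (per_dvd (n := n) hi2)
          omega
        · exact dvd_add ((per_dvd hi2).trans htd) dvd_rfl
        · rw [Nat.dvd_add_right ((per_dvd h).trans htd)]
          exact not_per_succ_dvd_per hn i
      · rw [h]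
        by_cases hd : per n (K + 1) ∣ t
        · refine ⟨t + per n K, by omega, le_rfl, level_eq hn (dvd_add htd dvd_rfl) ?_⟩
          rw [Nat.dvd_add_right hd]
          exact not_per_succ_dvd_per hn K
        · exact ⟨t, le_rfl, by omega, level_eq hn htd hd⟩
    have hzd : per n (k + 2) ∣ z := by
      have hz0 : 0 < z := by omega
      have := (level_spec hn hz0).1
      rw [hz] at this
      exact (per_dvd hi3).trans this
    have heq : window a n x L = window a n (z - (y - x)) L := by
      rw [window_eq_iff]
      intro d hd0 hdL
      by_cases hdy : x + d = y
      · have : z - (y - x) + d = z := by omega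
        rw [this, hdy, toep, toep, hz, hi]
        rfl
      · refine congrArg a (level_congr hn (j := k + 2) ?_ ?_)
        · refine Nat.ModEq.add_right_cancel' (y - x) ?_
          have e1 : x + d + (y - x) = y + d := by omega
          have e2 : z - (y - x) + d + (y - x) = z + d := by omega
          rw [e1, e2]
          exact Nat.ModEq.add_right _ (((Nat.modEq_zero_iff_dvd).2 hyd).trans
            ((Nat.modEq_zero_iff_dvd).2 hzd).symm)
        · intro hd
          rcases lt_or_gt_of_ne hdy with h | h
          · have := Nat.le_of_dvd (by omega) (Nat.dvd_sub hyd hd)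
            omega
          · have := Nat.le_of_dvd (by omega) (Nat.dvd_sub hd hyd)
            omega
    rw [heq]
    exact window_infix a n (by omega) (by omega)
  · push Not at hcase
    have hmod := Nat.mod_lt x hp1
    have heq : window a n x L = window a n (t + x % per n (k + 1)) L := by
      rw [window_eq_iff]
      intro d hd0 hdL
      have hcong : x + d ≡ t + x % per n (k + 1) + d [MOD per n (k + 1)] := by
        refine Nat.ModEq.add_right _ ?_
        have ht0 : t ≡ 0 [MOD per n (k + 1)] :=
          (Nat.modEq_zero_iff_dvd).2 ((per_dvd (by omega)).trans htd)
        have := ht0.add (Nat.mod_modEq x (per n (k + 1)))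
        rw [zero_add] at this
        exact this.symm
      by_cases hd : per n (k + 1) ∣ x + d
      · have h1 : toep a n (x + d) = a (k + 1) := by
          by_cases hd2 : per n (k + 2) ∣ x + d
          · exact hcase _ (by omega) (by omega) hd2
          · exact congrArg a (level_eq hn hd hd2)
        rw [h1]
        refine congrArg a (level_eq hn ((hcong.dvd_iff dvd_rfl).1 hd) ?_).symm
        rw [add_assoc t, Nat.dvd_add_right ((per_dvd hK).trans htd)]
        exact Nat.not_dvd_of_pos_of_lt (by omega) (by omega)
      · exact congrArg a (level_congr hn hcong hd)
    rw [heq]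
    exact window_infix a n (by omega) (by omega)

lemma mem_repet_set (hn : ∀ k, 2 ≤ n k) (ha : ∀ k, a k ≠ a (k + 1))
    {k L : ℕ} (hL : L + per n (k + 1) ≤ per n (k + 2)) :
    4 * per n (Kf a k) ∈ {L' | ∀ u ∈ ToeplitzLang a n, u.length = L →
      ∀ w ∈ ToeplitzLang a n, w.length = L' → u <:+: w} := by
  rintro u hu rfl w hw hwl
  obtain ⟨x, hx⟩ := exists_window_of_mem_lang a hn hu
  obtain ⟨s, hs⟩ := exists_window_of_mem_lang a hn hw
  rw [hx, hs, hwl]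
  exact window_infix_window hn ha hL x s

lemma repet_le (hn : ∀ k, 2 ≤ n k) (ha : ∀ k, a k ≠ a (k + 1))
    {k L : ℕ} (hL : L + per n (k + 1) ≤ per n (k + 2)) :
    repet a n L ≤ 4 * per n (Kf a k) := Nat.sInf_le (mem_repet_set hn ha hL)

lemma infix_of_repet (hn : ∀ k, 2 ≤ n k) (ha : ∀ k, a k ≠ a (k + 1))
    {L x s : ℕ} : window a n x L <:+: window a n s (repet a n L) := by
  obtain ⟨k, hk⟩ := exists_level_of_length hn L
  exact Nat.sInf_mem ⟨_, mem_repet_set hn ha hk⟩ _ (window_mem_lang a hn _ _) (by simp)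
    _ (window_mem_lang a hn _ _) (length_window a n _ _)

/-- With `K = Kf a k`, the word `p k (a K) p k` does not occur in `p (K-1)`. -/
lemma le_repet (hn : ∀ k, 2 ≤ n k) (ha : ∀ k, a k ≠ a (k + 1))
    (k : ℕ) : per n (Kf a k) ≤ repet a n (2 * per n (k + 1) - 1) := by
  by_contra hc
  have hK := add_two_le_Kf a ha k
  have hin := infix_of_repet hn ha (L := 2 * per n (k + 1) - 1)
    (x := per n (Kf a k) - per n (k + 1)) (s := 0)
  obtain ⟨s, -, hs2, hs⟩ := exists_of_infix_window a n hin
  rw [length_window] at hs hs2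
  have hp := per_pos hn (k + 1)
  have hd := per_dvd (n := n) (show k + 1 ≤ Kf a k by omega)
  have hle := Nat.le_of_dvd (per_pos hn _) hd
  have hsd := per_dvd_of_window_eq hn ha hd (per_pos hn _) hs
  rw [window_eq_iff] at hs
  have h := hs (per n (k + 1)) hp (by omega)
  rw [Nat.sub_add_cancel hle, toep, level_eq hn dvd_rfl (not_per_succ_dvd_per hn _)] at h
  have hpos : 0 < s + per n (k + 1) := by omega
  refine apply_ne_apply_Kf a (k := k) (i := level n (s + per n (k + 1))) ?_ ?_ h.symm
  · exact le_level hn hpos (dvd_add hsd dvd_rfl)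
  · exact level_lt hn hpos (Nat.not_dvd_of_pos_of_lt hpos (by omega))

end Repetitivity

/-! ### Comparison of upper limits -/

/-- `F` is eventually dominated, up to a constant, by values of `G` at arbitrarily late indices. -/
def TailDominated (F G : ℕ → ℝ) : Prop :=
  ∃ C : ℝ, 0 < C ∧ ∀ B : ℕ, ∃ L₀ : ℕ, ∀ L ≥ L₀, ∃ i ≥ B, F L ≤ C * G i

lemma TailDominated.isBoundedUnder {F G : ℕ → ℝ} (h : TailDominated F G)
    (hG : IsBoundedUnder (· ≤ ·) atTop G) : IsBoundedUnder (· ≤ ·) atTop F := by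
  obtain ⟨C, hC, h⟩ := h
  obtain ⟨b, hb⟩ := hG
  rw [eventually_map, eventually_atTop] at hb
  obtain ⟨B, hB⟩ := hb
  obtain ⟨L₀, hL⟩ := h B
  refine ⟨C * b, ?_⟩
  rw [eventually_map, eventually_atTop]
  refine ⟨L₀, fun L h0 => ?_⟩
  obtain ⟨i, hi, hle⟩ := hL L h0
  exact hle.trans (mul_le_mul_of_nonneg_left (hB i hi) hC.le)

lemma TailDominated.limsup_pos {F G : ℕ → ℝ} (h : TailDominated F G) (hF0 : ∀ i, 0 ≤ F i)
    (hG : IsBoundedUnder (· ≤ ·) atTop G) (hF : 0 < limsup F atTop) : 0 < limsup G atTop := by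
  obtain ⟨C, hC, h⟩ := h
  obtain ⟨c, hc0, hc⟩ := exists_between hF
  have hfreq : ∃ᶠ L in atTop, c < F L :=
    frequently_lt_of_lt_limsup (isCoboundedUnder_le_of_le atTop hF0) hc
  refine (div_pos hc0 hC).trans_le (le_limsup_of_frequently_le ?_ hG)
  rw [frequently_atTop] at hfreq ⊢
  intro B
  obtain ⟨L₀, hL⟩ := h B
  obtain ⟨L, hL0, hcL⟩ := hfreq L₀
  obtain ⟨i, hi, hle⟩ := hL L hL0
  refine ⟨i, hi, ?_⟩
  rw [div_le_iff₀ hC, mul_comm]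
  exact hcL.le.trans hle

lemma bounded_and_limsup_pos_iff {F G : ℕ → ℝ} (h1 : TailDominated F G) (h2 : TailDominated G F)
    (hF0 : ∀ i, 0 ≤ F i) (hG0 : ∀ i, 0 ≤ G i) :
    (IsBoundedUnder (· ≤ ·) atTop F ∧ 0 < limsup F atTop) ↔
      (IsBoundedUnder (· ≤ ·) atTop G ∧ 0 < limsup G atTop) :=
  ⟨fun h => ⟨h2.isBoundedUnder h.1, h1.limsup_pos hF0 (h2.isBoundedUnder h.1) h.2⟩,
    fun h => ⟨h1.isBoundedUnder h.1, h2.limsup_pos hG0 (h1.isBoundedUnder h.1) h.2⟩⟩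

section Final

variable [Finite A] {a : ℕ → A} {n : ℕ → ℕ}
  {α : ℝ} (hα : 1 ≤ α)

/-- A length `L` is matched with the least `k` such that `L ≤ per n (k+2) - per n (k+1)`; then
`per n (k+1) ≤ 2 * L`, and `k` may be replaced by the largest `m i ≤ k`. -/
lemma repet_dominated (hn : ∀ k, 2 ≤ n k) (ha : ∀ k, a k ≠ a (k + 1)) (hα : 1 ≤ α)
    : TailDominated (fun L : ℕ => (repet a n L : ℝ) / (L : ℝ) ^ α)
    (fun i : ℕ => (per n (Kf a (mseq a i)) : ℝ) / (per n (mseq a i + 1) : ℝ) ^ α) := by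
  refine ⟨4 * 2 ^ α, by positivity, fun B => ⟨per n (mseq a B + 2) + 1, fun L hL => ?_⟩⟩
  classical
  have hex := exists_level_of_length hn L
  obtain ⟨k, hk, hmin⟩ : ∃ k, L + per n (k + 1) ≤ per n (k + 2) ∧
      ∀ j < k, ¬ L + per n (j + 1) ≤ per n (j + 2) :=
    ⟨Nat.find hex, Nat.find_spec hex, fun j hj => Nat.find_min hex hj⟩
  have hkB : mseq a B < k := by
    by_contra hc
    have := (per_strictMono hn).monotone (show k + 2 ≤ mseq a B + 2 by omega)
    omega
  have h2L : per n (k + 1) ≤ 2 * L := by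
    obtain ⟨j, rfl⟩ : ∃ j, k = j + 1 := ⟨k - 1, by omega⟩
    have h1 := hmin j (by omega)
    have h2 : 2 * per n (j + 1) ≤ per n (j + 2) := two_mul_per_le hn _
    show per n (j + 2) ≤ _
    omega
  obtain ⟨i, hi1, hi2, hi⟩ := exists_mseq a k
  refine ⟨i, ?_, ?_⟩
  · have : mseq a B < mseq a (i + 1) := by omega
    have := (mseq_strictMono a).lt_iff_lt.1 this
    omega
  have hp := per_pos hn (mseq a i + 1)
  have hpL : per n (mseq a i + 1) ≤ 2 * L :=
    ((per_strictMono hn).monotone (by omega)).trans h2L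
  have hR : (repet a n L : ℝ) ≤ 4 * per n (Kf a (mseq a i)) := by
    rw [← hi]; exact_mod_cast repet_le hn ha hk
  have hp' : (0 : ℝ) < per n (mseq a i + 1) := by exact_mod_cast hp
  have hL' : (0 : ℝ) < L := by
    have : 0 < L := by omega
    exact_mod_cast this
  have hpow : (per n (mseq a i + 1) : ℝ) ^ α ≤ 2 ^ α * (L : ℝ) ^ α := by
    rw [← Real.mul_rpow (by norm_num) hL'.le]
    exact Real.rpow_le_rpow hp'.le (by exact_mod_cast hpL) (by linarith)
  have hX : (0 : ℝ) < (L : ℝ) ^ α := Real.rpow_pos_of_pos hL' _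
  have hY : (0 : ℝ) < (per n (mseq a i + 1) : ℝ) ^ α := Real.rpow_pos_of_pos hp' _
  rw [← mul_div_assoc, div_le_div_iff₀ hX hY]
  calc (repet a n L : ℝ) * (per n (mseq a i + 1) : ℝ) ^ α
      ≤ (4 * per n (Kf a (mseq a i))) * (2 ^ α * (L : ℝ) ^ α) := by gcongr
    _ = _ := by ring

lemma dominated_repet (hn : ∀ k, 2 ≤ n k) (ha : ∀ k, a k ≠ a (k + 1)) (hα : 1 ≤ α) : TailDominated
    (fun i : ℕ => (per n (Kf a (mseq a i)) : ℝ) / (per n (mseq a i + 1) : ℝ) ^ α)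
    (fun L : ℕ => (repet a n L : ℝ) / (L : ℝ) ^ α) := by
  refine ⟨2 ^ α, by positivity, fun B => ⟨B, fun i hi => ⟨2 * per n (mseq a i + 1) - 1, ?_, ?_⟩⟩⟩
  · have h1 := lt_per hn (mseq a i + 1)
    have h2 : i ≤ mseq a i := (mseq_strictMono a).le_apply
    omega
  have hp := per_pos hn (mseq a i + 1)
  have hp' : (0 : ℝ) < per n (mseq a i + 1) := by exact_mod_cast hp
  set L := 2 * per n (mseq a i + 1) - 1 with hLdef
  have hL' : (0 : ℝ) < L := by
    have : 0 < L := by omega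
    exact_mod_cast this
  have hR : (per n (Kf a (mseq a i)) : ℝ) ≤ repet a n L := by
    exact_mod_cast le_repet hn ha (mseq a i)
  have hLp : L ≤ 2 * per n (mseq a i + 1) := by omega
  have hpow : (L : ℝ) ^ α ≤ 2 ^ α * (per n (mseq a i + 1) : ℝ) ^ α := by
    rw [← Real.mul_rpow (by norm_num) hp'.le]
    exact Real.rpow_le_rpow hL'.le (by exact_mod_cast hLp) (by linarith)
  have hX : (0 : ℝ) < (L : ℝ) ^ α := Real.rpow_pos_of_pos hL' _
  have hY : (0 : ℝ) < (per n (mseq a i + 1) : ℝ) ^ α := Real.rpow_pos_of_pos hp' _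
  dsimp only
  rw [← mul_div_assoc, div_le_div_iff₀ hY hX]
  calc (per n (Kf a (mseq a i)) : ℝ) * (L : ℝ) ^ α
      ≤ repet a n L * (2 ^ α * (per n (mseq a i + 1) : ℝ) ^ α) := by gcongr
    _ = _ := by ring

end Final

end SimpleToeplitz

/-- `0 < limsup R(L)/L^α < ∞` iff
`0 < limsup (|p (K (m i) - 1)| + 1)/(|p (m i)| + 1)^α < ∞`. -/
theorem stmt17 {A : Type*} [Fintype A] [Nonempty A]
    (a : ℕ → A) (n : ℕ → ℕ) (hn : ∀ k, 2 ≤ n k) (ha : ∀ k, a k ≠ a (k + 1))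
    (hAev : 2 ≤ (Aev a).ncard)
    (α : ℝ) (hα : 1 ≤ α) :
    (Filter.IsBoundedUnder (· ≤ ·) Filter.atTop
        (fun L : ℕ => (repet a n L : ℝ) / (L : ℝ) ^ α) ∧
      0 < Filter.limsup (fun L : ℕ => (repet a n L : ℝ) / (L : ℝ) ^ α) Filter.atTop) ↔
    (Filter.IsBoundedUnder (· ≤ ·) Filter.atTop
        (fun i : ℕ => (((ToeplitzBlock a n (Kf a (mseq a i) - 1)).length : ℝ) + 1) /
          (((ToeplitzBlock a n (mseq a i)).length : ℝ) + 1) ^ α) ∧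
      0 < Filter.limsup
        (fun i : ℕ => (((ToeplitzBlock a n (Kf a (mseq a i) - 1)).length : ℝ) + 1) /
          (((ToeplitzBlock a n (mseq a i)).length : ℝ) + 1) ^ α) Filter.atTop) := by
  have hblock : ∀ k, ((ToeplitzBlock a n k).length : ℝ) + 1 = SimpleToeplitz.per n (k + 1) :=
    fun k => by exact_mod_cast SimpleToeplitz.length_block a hn k
  have hK : ∀ i, Kf a (mseq a i) - 1 + 1 = Kf a (mseq a i) := fun i => by
    have := SimpleToeplitz.add_two_le_Kf a ha (mseq a i)
    omega
  simp only [hblock, hK]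
  exact SimpleToeplitz.bounded_and_limsup_pos_iff (SimpleToeplitz.repet_dominated hn ha hα)
    (SimpleToeplitz.dominated_repet hn ha hα) (fun _ => by positivity) (fun _ => by positivity)
end

section
/- The simple Toeplitz subshift is linearly repetitive — i.e. there exists a constant c such that R(L) ≤ c·L for all L ≥ 1 — if and only if the sequence i ↦ ∏_{j = m_i + 1}^{K(m_i) − 1} n_j (for i ≥ 1) is bounded above. -/
/-!
Write `q k = n 0 ⋯ n (k-1)`, so that `|p k| + 1 = q (k+1)`. All blocks are prefixes of one infinite
word whose letter at position `s ≥ 1` is `a j`, where `j` is least with `q (j+1) ∤ s` (`block_eq`);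
the language consists of the factors of this word, and off the multiples of `q k` the word is
`q k`-periodic.

*Upper bound* (`repet_le`). A word of length at most `q (k+1)` sees at most one multiple of
`q (k+1)`, so it is determined by a letter of `A_{k+1}` and a relative position. Each such letter is
`a i` for some `k < i ≤ K k`. For `i < K k` it occurs at the positions `c * q (K k) + q i`; for
`i = K k` it occurs at one of any two consecutive multiples of `q (K k)`. Hence
`R L ≤ 4 * q (K k)` for `L ≤ q (k+1)`.
If the products are bounded by `B` (including `i = 0`), then so are the products
`∏_{j=k+1}^{K k - 1} n j` for every `k`, since `K` is at most `K (m i)` on `[m i, m (i+1))`, and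
also all `n j` with `j ≥ 1`, because `K (j-1) ≥ j + 1`. For `q k < L ≤ q (k+1)` with `k ≥ 1` this
gives `R L ≤ 4 * B^2 * L`.

*Lower bound* (`le_repet`). Let `k = m i` with `i ≥ 1` and `l = K k`. As `K (k-1) < l`, the
letter `a l` equals `a k` and differs from `a (k+1), …, a (l-1)`. The word `p_k a_k p_k` has length
`2 * q (k+1) - 1` and period `q k`, and it belongs to the language. It is not a factor of
`p_{l-1}`: any window of that length contains a multiple `t` of `q (k+1)` in its first half,
whose letter is some `a j` with `k < j < l`, while the letter at `t + q k` is `a k`. Hence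
`q l ≤ R (2 * q (k+1) - 1)`, and linear repetitivity bounds `q l / q (k+1)`, which is the product.
-/

open Filter

/-! ### Levels of positions and the Toeplitz word -/

/-- `Q n k = n 0 * ⋯ * n (k-1)`, so that `|p k| + 1 = Q n (k+1)` and `Q n 0 = 1`. -/
def Q (n : ℕ → ℕ) (k : ℕ) : ℕ := ∏ i ∈ Finset.range k, n i

/-- The Toeplitz word, read at the positions `s ≥ 1`: the letter at `s` is `a j` for the least `j`
such that `Q n (j+1)` does not divide `s`. The value at `s = 0` is irrelevant. -/
noncomputable def toepLetter {A : Type*} (a : ℕ → A) (n : ℕ → ℕ) (s : ℕ) : A :=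
  a (sInf {j | ¬ Q n (j + 1) ∣ s})

/-- The factor of length `L` of the Toeplitz word starting at position `s`. -/
noncomputable def toepWord {A : Type*} (a : ℕ → A) (n : ℕ → ℕ) (s L : ℕ) : List A :=
  (List.range' s L).map (toepLetter a n)

section
variable {A : Type*} {a : ℕ → A} {n : ℕ → ℕ}

lemma Q_succ (k : ℕ) : Q n (k + 1) = Q n k * n k := by
  simp [Q, Finset.prod_range_succ]

lemma Q_dvd {i j : ℕ} (h : i ≤ j) : Q n i ∣ Q n j :=
  Finset.prod_dvd_prod_of_subset _ _ _ (Finset.range_mono h)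

lemma Q_pos (hn : ∀ k, 2 ≤ n k) (k : ℕ) : 0 < Q n k :=
  Finset.prod_pos fun i _ => by have := hn i; omega

lemma two_mul_Q_le (hn : ∀ k, 2 ≤ n k) (k : ℕ) : 2 * Q n k ≤ Q n (k + 1) := by
  rw [Q_succ, mul_comm]; exact Nat.mul_le_mul_left _ (hn k)

lemma lt_Q (hn : ∀ k, 2 ≤ n k) (k : ℕ) : k < Q n k := by
  induction k with
  | zero => simp [Q]
  | succ k ih => have := two_mul_Q_le hn k; omega

lemma Q_mono (hn : ∀ k, 2 ≤ n k) {i j : ℕ} (h : i ≤ j) : Q n i ≤ Q n j :=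
  Nat.le_of_dvd (Q_pos hn j) (Q_dvd h)

lemma Q_mul_prod_Icc {k K : ℕ} (h : k < K) :
    Q n (k + 1) * ∏ j ∈ Finset.Icc (k + 1) (K - 1), n j = Q n K := by
  have : Finset.Icc (k + 1) (K - 1) = Finset.Ico (k + 1) K := by ext; simp; omega
  rw [this, Q, Q]
  exact Finset.prod_range_mul_prod_Ico n (by omega)

lemma toepLetter_eq {j s : ℕ} (h1 : Q n j ∣ s) (h2 : ¬ Q n (j + 1) ∣ s) :
    toepLetter a n s = a j := by
  unfold toepLetter
  congr 1
  apply le_antisymm (Nat.sInf_le h2)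
  refine le_csInf ⟨j, h2⟩ fun i hi => ?_
  by_contra hlt
  exact hi ((Q_dvd (by omega)).trans h1)

lemma exists_level (hn : ∀ k, 2 ≤ n k) {s : ℕ} (hs : 0 < s) :
    ∃ j, Q n j ∣ s ∧ ¬ Q n (j + 1) ∣ s := by
  by_contra! h
  have hall : ∀ j, Q n j ∣ s := by
    intro j
    induction j with
    | zero => simp [Q]
    | succ j ih => exact h j ih
  exact absurd (Nat.le_of_dvd hs (hall s)) (not_le.2 (lt_Q hn s))

lemma exists_letter (hn : ∀ k, 2 ≤ n k) {s k : ℕ} (hs : 0 < s) (hk : Q n k ∣ s) :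
    ∃ j, k ≤ j ∧ Q n j ∣ s ∧ toepLetter a n s = a j := by
  obtain ⟨j, h1, h2⟩ := exists_level hn hs
  refine ⟨j, ?_, h1, toepLetter_eq h1 h2⟩
  by_contra hlt
  exact h2 ((Q_dvd (by omega)).trans hk)

/-- Off the multiples of `Q n k` the Toeplitz word is `Q n k`-periodic. -/
lemma toepLetter_congr (hn : ∀ k, 2 ≤ n k) {s t k : ℕ} (h : s ≡ t [MOD Q n k])
    (hs : ¬ Q n k ∣ s) : toepLetter a n s = toepLetter a n t := by
  have hs0 : 0 < s := Nat.pos_of_ne_zero (by rintro rfl; simp at hs)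
  obtain ⟨j, h1, h2⟩ := exists_level hn hs0
  have hjk : j < k := by
    by_contra hle
    exact hs ((Q_dvd (by omega)).trans h1)
  rw [toepLetter_eq h1 h2, toepLetter_eq ((h.dvd_iff (Q_dvd hjk.le)).1 h1)
    (fun h3 => h2 ((h.dvd_iff (Q_dvd hjk)).2 h3))]

/-! ### Factors of the Toeplitz word -/

@[simp] lemma length_toepWord (s L : ℕ) : (toepWord a n s L).length = L := by simp [toepWord]

lemma toepWord_add (s L M : ℕ) :
    toepWord a n s (L + M) = toepWord a n s L ++ toepWord a n (s + L) M := by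
  simp [toepWord, ← List.map_append]

lemma toepWord_congr {s t L : ℕ}
    (h : ∀ i < L, toepLetter a n (s + i) = toepLetter a n (t + i)) :
    toepWord a n s L = toepWord a n t L := by
  apply List.ext_getElem (by simp)
  intro i h1 h2
  simpa [toepWord] using h i (by simpa using h1)

lemma toepLetter_eq_of_toepWord_eq {s t L : ℕ} (h : toepWord a n s L = toepWord a n t L)
    {i : ℕ} (hi : i < L) : toepLetter a n (s + i) = toepLetter a n (t + i) := by
  have := congrArg (fun l => l[i]?) h
  simpa [toepWord, hi] using this

lemma toepWord_infix {s L s' L' : ℕ} (h1 : s ≤ s') (h2 : s' + L' ≤ s + L) :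
    toepWord a n s' L' <:+: toepWord a n s L := by
  obtain ⟨x, rfl⟩ := Nat.exists_eq_add_of_le h1
  obtain ⟨y, hy⟩ := Nat.exists_eq_add_of_le h2
  obtain rfl : L = x + L' + y := by omega
  refine ⟨toepWord a n s x, toepWord a n (s + (x + L')) y, ?_⟩
  rw [toepWord_add, toepWord_add]

lemma exists_of_infix_toepWord {u : List A} {s L : ℕ} (h : u <:+: toepWord a n s L) :
    ∃ s', s ≤ s' ∧ s' + u.length ≤ s + L ∧ u = toepWord a n s' u.length := by
  obtain ⟨x, y, h⟩ := h
  have hL : L = x.length + u.length + y.length := by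
    have := congrArg List.length h
    simp at this; omega
  refine ⟨s + x.length, by omega, by omega, ?_⟩
  rw [hL, toepWord_add, toepWord_add] at h
  have h1 := (List.append_inj h (by simp)).1
  exact (List.append_inj h1 (by simp)).2

/-- The block `p k` is the prefix of length `Q n (k+1) - 1` of the Toeplitz word. -/
lemma block_eq (hn : ∀ k, 2 ≤ n k) (k : ℕ) :
    ToeplitzBlock a n k = toepWord a n 1 (Q n (k + 1) - 1) := by
  induction k with
  | zero =>
    rw [ToeplitzBlock, eq_comm, List.eq_replicate_iff]
    have hQ : Q n (0 + 1) = n 0 := by simp [Q]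
    refine ⟨by simp [hQ], ?_⟩
    intro b hb
    simp only [toepWord, List.mem_map, List.mem_range'_1] at hb
    obtain ⟨s, hs, rfl⟩ := hb
    refine toepLetter_eq (by simp [Q]) fun hd => ?_
    have := Nat.le_of_dvd (by omega) hd
    omega
  | succ k ih =>
    rw [ToeplitzBlock, ih]
    have hq := Q_pos hn (k + 1)
    have hQ2 : Q n (k + 1 + 1) = n (k + 1) * Q n (k + 1) := by rw [Q_succ, mul_comm]
    rw [hQ2]
    -- the letter at a multiple `d * Q n (k+1)` with `0 < d < n (k+1)` is `a (k+1)`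
    have hmul : ∀ d, 0 < d → d < n (k + 1) →
        toepLetter a n (d * Q n (k + 1)) = a (k + 1) := by
      intro d hd0 hd
      refine toepLetter_eq (Dvd.intro_left _ rfl) fun hdv => ?_
      rw [hQ2] at hdv
      have := Nat.le_of_dvd hd0 (Nat.dvd_of_mul_dvd_mul_right hq hdv)
      omega
    have key : ∀ c, 1 ≤ c → c ≤ n (k + 1) →
        List.intercalate [a (k + 1)]
          (List.replicate c (toepWord a n 1 (Q n (k + 1) - 1))) =
        toepWord a n 1 (c * Q n (k + 1) - 1) := by
      intro c hc
      induction c, hc using Nat.le_induction with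
      | base => intro _; simp [List.intercalate]
      | succ c hc ihc =>
        intro hc'
        have e : (c + 1) * Q n (k + 1) - 1 =
            (Q n (k + 1) - 1) + (1 + (c * Q n (k + 1) - 1)) := by
          have : 0 < c * Q n (k + 1) := by positivity
          rw [add_mul]; omega
        have hne : List.replicate c (toepWord a n 1 (Q n (k + 1) - 1)) ≠ [] := by
          simp; omega
        rw [List.replicate_succ, List.intercalate_cons_of_ne_nil hne, ihc (by omega), e,
          toepWord_add, toepWord_add, List.append_assoc]
        congr 1
        have e1 : 1 + (Q n (k + 1) - 1) = Q n (k + 1) := by omega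
        rw [e1]
        congr 1
        · have := hmul 1 one_pos (by omega)
          simp only [one_mul] at this
          simp [toepWord, this]
        · apply toepWord_congr
          intro i hi
          by_cases hd : Q n (k + 1) ∣ 1 + i
          · obtain ⟨d, hd⟩ := hd
            have hd0 : 0 < d := Nat.pos_of_ne_zero (by rintro rfl; omega)
            have hdc : d < c := by
              by_contra hle
              have := Nat.mul_le_mul_right (Q n (k + 1)) (not_lt.1 hle)
              rw [mul_comm d] at this
              omega
            have e2 : Q n (k + 1) + 1 + i = (d + 1) * Q n (k + 1) := by
              rw [add_mul, mul_comm d, ← hd]; omega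
            rw [e2, hd, mul_comm (Q n (k + 1)), hmul d hd0 (by omega),
              hmul (d + 1) (by omega) (by omega)]
          · refine toepLetter_congr hn (k := k + 1) ?_ hd
            rw [add_assoc]
            simp [Nat.ModEq]
    exact key _ (by have := hn (k + 1); omega) le_rfl

lemma toepWord_mem (hn : ∀ k, 2 ≤ n k) {s : ℕ} (hs : 1 ≤ s) (L : ℕ) :
    toepWord a n s L ∈ ToeplitzLang a n := by
  refine ⟨s + L, ?_⟩
  rw [block_eq hn]
  have := lt_Q hn (s + L + 1)
  exact toepWord_infix hs (by omega)

lemma exists_of_mem_lang (hn : ∀ k, 2 ≤ n k) {u : List A} (hu : u ∈ ToeplitzLang a n) :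
    ∃ s, 1 ≤ s ∧ u = toepWord a n s u.length := by
  obtain ⟨k, hk⟩ := hu
  rw [block_eq hn] at hk
  obtain ⟨s, h1, _, h2⟩ := exists_of_infix_toepWord hk
  exact ⟨s, h1, h2⟩

/-! ### The functions `K` and `m` -/

lemma Kf_spec [Fintype A] (a : ℕ → A) (k : ℕ) :
    k < Kf a k ∧ {x | ∃ i, k + 1 ≤ i ∧ i ≤ Kf a k ∧ a i = x} = Ak a (k + 1) := by
  refine Nat.sInf_mem (s := {j | k < j ∧ {x | ∃ i, k + 1 ≤ i ∧ i ≤ j ∧ a i = x} = Ak a (k + 1)}) ?_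
  classical
  have hx : ∀ x : A, ∃ i, x ∈ Ak a (k + 1) → k + 1 ≤ i ∧ a i = x := by
    intro x
    by_cases h : x ∈ Ak a (k + 1)
    · obtain ⟨i, hi⟩ := h
      exact ⟨i, fun _ => hi⟩
    · exact ⟨0, fun h' => absurd h' h⟩
  choose g hg using hx
  refine ⟨k + 1 + Finset.univ.sup g, by omega, ?_⟩
  ext x
  constructor
  · rintro ⟨i, h1, _, h2⟩
    exact ⟨i, h1, h2⟩
  · intro h
    have : g x ≤ Finset.univ.sup g := Finset.le_sup (Finset.mem_univ x)
    exact ⟨g x, (hg x h).1, by omega, (hg x h).2⟩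

lemma exists_index [Fintype A] {k j : ℕ} (h : k + 1 ≤ j) :
    ∃ i, k + 1 ≤ i ∧ i ≤ Kf a k ∧ a i = a j := by
  have : a j ∈ Ak a (k + 1) := ⟨j, h, rfl⟩
  rwa [← (Kf_spec a k).2] at this

lemma add_two_le_Kf [Fintype A] (hAev : 2 ≤ (Aev a).ncard) (k : ℕ) : k + 2 ≤ Kf a k := by
  obtain ⟨h1, h2⟩ := Kf_spec a k
  by_contra hlt
  have hK : Kf a k = k + 1 := by omega
  have hsub : Aev a ⊆ {a (k + 1)} := by
    intro x hx
    have hx' : x ∈ Ak a (k + 1) := Set.mem_iInter.1 hx (k + 1)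
    rw [← h2] at hx'
    obtain ⟨i, hi1, hi2, rfl⟩ := hx'
    obtain rfl : i = k + 1 := by omega
    rfl
  have := Set.ncard_le_ncard hsub
  rw [Set.ncard_singleton] at this
  omega

/-- By minimality of `K k`, its letter is new. -/
lemma ne_Kf_letter [Fintype A] {k i : ℕ} (h1 : k + 1 ≤ i) (h2 : i < Kf a k) :
    a i ≠ a (Kf a k) := by
  intro he
  have hlt : Kf a k - 1 < Kf a k := by omega
  refine Nat.notMem_of_lt_sInf hlt ⟨by omega, ?_⟩
  rw [← (Kf_spec a k).2]
  ext x
  constructor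
  · rintro ⟨j, h3, h4, h5⟩
    exact ⟨j, h3, by omega, h5⟩
  · rintro ⟨j, h3, h4, h5⟩
    rcases h4.lt_or_eq with h | rfl
    · exact ⟨j, h3, by omega, h5⟩
    · exact ⟨i, h1, by omega, he.trans h5⟩

/-- When `K` increases from `k` to `k+1`, the letter completing `A_{k+2}` is `a (k+1)` itself. -/
lemma Kf_letter_eq [Fintype A] {k : ℕ} (h : Kf a k < Kf a (k + 1)) :
    a (Kf a (k + 1)) = a (k + 1) := by
  obtain ⟨i, h1, h2, h3⟩ := exists_index (a := a) (k := k) (j := Kf a (k + 1))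
    (by have := (Kf_spec a (k + 1)).1; omega)
  rcases h1.eq_or_lt with rfl | h1
  · exact h3.symm
  · exact absurd h3 (ne_Kf_letter (by omega) (by omega))

lemma mseq_succ_spec [Fintype A] (hAev : 2 ≤ (Aev a).ncard) (i : ℕ) :
    mseq a i < mseq a (i + 1) ∧ Kf a (mseq a i) < Kf a (mseq a (i + 1)) := by
  refine Nat.sInf_mem (s := {j | mseq a i < j ∧ Kf a (mseq a i) < Kf a j}) ⟨Kf a (mseq a i), ?_⟩
  have := add_two_le_Kf hAev (mseq a i)
  have := add_two_le_Kf hAev (Kf a (mseq a i))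
  constructor <;> omega

lemma Kf_le_of_lt_mseq_succ {i j : ℕ} (h1 : mseq a i ≤ j) (h2 : j < mseq a (i + 1)) :
    Kf a j ≤ Kf a (mseq a i) := by
  rcases h1.eq_or_lt with rfl | h1
  · rfl
  · by_contra hlt
    exact Nat.notMem_of_lt_sInf h2 ⟨h1, not_le.1 hlt⟩

lemma exists_mseq_le_lt [Fintype A] (hAev : 2 ≤ (Aev a).ncard) (k : ℕ) :
    ∃ i, mseq a i ≤ k ∧ k < mseq a (i + 1) := by
  induction k with
  | zero => exact ⟨0, le_rfl, by have := (mseq_succ_spec hAev 0).1; omega⟩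
  | succ k ih =>
    obtain ⟨i, h1, h2⟩ := ih
    by_cases h : k + 1 < mseq a (i + 1)
    · exact ⟨i, by omega, h⟩
    · exact ⟨i + 1, by omega, by have := (mseq_succ_spec hAev (i + 1)).1; omega⟩

/-! ### Bounds for the repetitivity function -/

/-- Every word of length at most `|p k| + 1` occurs in every word of length `4 (|p (K k - 1)| + 1)`.
A short word sees at most one multiple `M` of `Q n (k+1)`, so it is determined by the letter at `M`
and the position relative to `M`; each letter of `A_{k+1}` appears at multiples of `Q n (k+1)`
within distance of order `Q n (K k)`. -/
lemma infix_of_le [Fintype A] (hn : ∀ k, 2 ≤ n k) {k L : ℕ} (hL : L ≤ Q n (k + 1))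
    {u w : List A} (hu : u ∈ ToeplitzLang a n) (hul : u.length = L)
    (hw : w ∈ ToeplitzLang a n) (hwl : w.length = 4 * Q n (Kf a k)) : u <:+: w := by
  obtain ⟨s, hs, hu⟩ := exists_of_mem_lang hn hu
  obtain ⟨s', hs', hw⟩ := exists_of_mem_lang hn hw
  rw [hul] at hu
  rw [hwl] at hw
  rw [hu, hw]
  have hkK := (Kf_spec a k).1
  have hq := Q_pos hn (k + 1)
  have hqK := Q_mono hn (show k + 1 ≤ Kf a k by omega)
  have hQK := Q_pos hn (Kf a k)
  -- `M = s + r` is the first multiple of `Q n (k+1)` at or after `s`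
  obtain ⟨M, r, hM, hr, hMd⟩ : ∃ M r, M = s + r ∧ r < Q n (k + 1) ∧ Q n (k + 1) ∣ M := by
    refine ⟨_, (Q n (k + 1) - s % Q n (k + 1)) % Q n (k + 1), rfl, Nat.mod_lt _ hq, ?_⟩
    rw [Nat.dvd_iff_mod_eq_zero, Nat.add_mod, Nat.mod_mod, ← Nat.add_mod,
      ← Nat.mod_add_mod, Nat.add_sub_cancel' (Nat.mod_lt _ hq).le, Nat.mod_self]
  obtain ⟨M', hM'd, hM'l, hM'u, hMM⟩ : ∃ M', Q n (k + 1) ∣ M' ∧ s' + Q n (k + 1) ≤ M' ∧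
      M' + Q n (k + 1) ≤ s' + 4 * Q n (Kf a k) ∧ toepLetter a n M' = toepLetter a n M := by
    obtain ⟨j, hj, _, hfM⟩ := exists_letter (a := a) hn (show 0 < M by omega) hMd
    obtain ⟨i, hi1, hi2, hi3⟩ := exists_index (a := a) hj
    set c := s' / Q n (Kf a k) + 2 with hc
    have hc1 : s' + Q n (Kf a k) ≤ c * Q n (Kf a k) := by
      have h1 := Nat.div_add_mod s' (Q n (Kf a k))
      have h2 := Nat.mod_lt s' hQK
      rw [hc, add_mul, mul_comm (s' / _)]; omega
    have hc2 : c * Q n (Kf a k) ≤ s' + 2 * Q n (Kf a k) := by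
      have h1 := Nat.div_add_mod s' (Q n (Kf a k))
      rw [hc, add_mul, mul_comm (s' / _)]; omega
    have hcd : Q n (k + 1) ∣ c * Q n (Kf a k) := Dvd.dvd.mul_left (Q_dvd (by omega)) _
    rcases hi2.lt_or_eq with hi2 | rfl
    · have := Q_mono hn hi2.le
      refine ⟨c * Q n (Kf a k) + Q n i, dvd_add hcd (Q_dvd hi1), by omega, by omega, ?_⟩
      rw [hfM, ← hi3]
      refine toepLetter_eq (dvd_add (Dvd.dvd.mul_left (Q_dvd hi2.le) _) dvd_rfl) fun hd => ?_
      have hd' : Q n (i + 1) ∣ Q n i := (Nat.dvd_add_right (Dvd.dvd.mul_left (Q_dvd (Nat.succ_le_of_lt hi2)) c)).1 hd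
      have := Nat.le_of_dvd (Q_pos hn i) hd'
      have := two_mul_Q_le hn i
      have := Q_pos hn i
      omega
    · -- of two consecutive multiples of `Q n K`, one is not a multiple of `Q n (K+1)`
      have hlet : ∀ d, ¬ n (Kf a k) ∣ d →
          toepLetter a n (d * Q n (Kf a k)) = a (Kf a k) := by
        intro d hd
        refine toepLetter_eq (Dvd.intro_left _ rfl) fun hdv => hd ?_
        rw [Q_succ, mul_comm] at hdv
        exact Nat.dvd_of_mul_dvd_mul_right hQK hdv
      by_cases hdc : n (Kf a k) ∣ c
      · refine ⟨(c + 1) * Q n (Kf a k), Dvd.dvd.mul_left (Q_dvd (by omega)) _, ?_, ?_, ?_⟩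
        · rw [add_mul]; omega
        · rw [add_mul]; omega
        · rw [hfM, ← hi3]
          refine hlet _ fun h => ?_
          have h1 := Nat.le_of_dvd one_pos ((Nat.dvd_add_right hdc).1 h)
          have := hn (Kf a k)
          omega
      · exact ⟨c * Q n (Kf a k), hcd, by omega, by omega, by rw [hfM, ← hi3, hlet c hdc]⟩
  have heq : toepWord a n s L = toepWord a n (M' - r) L := by
    apply toepWord_congr
    intro i hi
    by_cases hir : i = r
    · subst hir
      rw [← hM, Nat.sub_add_cancel (by omega), hMM]
    · refine toepLetter_congr hn (k := k + 1) ?_ fun hd => ?_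
      · have h1 : s + i + r = M + i := by omega
        have h2 : M' - r + i + r = M' + i := by omega
        refine Nat.ModEq.add_right_cancel' r ?_
        rw [h1, h2]
        refine Nat.ModEq.add_right i ?_
        exact ((Nat.modEq_zero_iff_dvd).2 hMd).trans ((Nat.modEq_zero_iff_dvd).2 hM'd).symm
      · -- the distance between `s + i` and `M` is nonzero and less than `Q n (k+1)`
        rcases lt_or_gt_of_ne hir with h | h
        · have := Nat.le_of_dvd (by omega) (Nat.dvd_sub hMd hd)
          omega
        · have := Nat.le_of_dvd (by omega) (Nat.dvd_sub hd hMd)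
          omega
  rw [heq]
  exact toepWord_infix (by omega) (by omega)

lemma repet_le [Fintype A] (hn : ∀ k, 2 ≤ n k) {k L : ℕ} (hL : L ≤ Q n (k + 1)) :
    repet a n L ≤ 4 * Q n (Kf a k) :=
  Nat.sInf_le fun _ hu hul _ hw hwl => infix_of_le hn hL hu hul hw hwl

lemma repet_spec [Fintype A] (hn : ∀ k, 2 ≤ n k) (L : ℕ) :
    ∀ u ∈ ToeplitzLang a n, u.length = L →
    ∀ w ∈ ToeplitzLang a n, w.length = repet a n L → u <:+: w :=
  Nat.sInf_mem (s := {L' | ∀ u ∈ ToeplitzLang a n, u.length = L →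
    ∀ w ∈ ToeplitzLang a n, w.length = L' → u <:+: w}) ⟨4 * Q n (Kf a L), fun _ hu hul _ hw hwl =>
      infix_of_le hn (by have := lt_Q hn (L + 1); omega) hu hul hw hwl⟩

/-- If `K` increases at `k+1`, the word `u = p_{k+1} a_{k+1} p_{k+1}` belongs to the language and has
period `Q n (k+1)`, whereas `p_{K-1}`, `K = K (k+1)`, has no factor of this length and period. -/
lemma le_repet [Fintype A] (hn : ∀ k, 2 ≤ n k) {k : ℕ} (h : Kf a k < Kf a (k + 1)) :
    Q n (Kf a (k + 1)) ≤ repet a n (2 * Q n (k + 2) - 1) := by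
  set K := Kf a (k + 1) with hK
  have hkK : k + 1 < K := (Kf_spec a (k + 1)).1
  have hletter : a K = a (k + 1) := Kf_letter_eq h
  have hq0 := Q_pos hn (k + 1)
  have h2q : 2 * Q n (k + 1) ≤ Q n (k + 2) := two_mul_Q_le hn (k + 1)
  have hqK := Q_mono hn (show k + 2 ≤ K by omega)
  have hqdK : Q n (k + 2) ∣ Q n K := Q_dvd (by omega)
  by_contra! hlt
  set s := Q n K - Q n (k + 2) + 1 with hs
  set u := toepWord a n s (2 * Q n (k + 2) - 1) with hu
  have h1 := repet_spec hn (2 * Q n (k + 2) - 1) u (toepWord_mem hn (by omega) _) (by simp [hu])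
    (toepWord a n 1 (repet a n (2 * Q n (k + 2) - 1))) (toepWord_mem hn le_rfl _) (by simp)
  obtain ⟨s', hs1, hs2, hs3⟩ := exists_of_infix_toepWord h1
  simp only [hu, length_toepWord] at hs2 hs3
  -- at multiples of `Q n (k+1)` inside the window of `u` the letter is always `a (k+1)`
  have hcen : ∀ t, s ≤ t → t < Q n K + Q n (k + 2) → Q n (k + 1) ∣ t →
      toepLetter a n t = a (k + 1) := by
    intro t ht1 ht2 htd
    by_cases htK : t = Q n K
    · rw [htK, ← hletter]
      refine toepLetter_eq dvd_rfl fun hd => ?_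
      have := Nat.le_of_dvd (Q_pos hn K) hd
      have := two_mul_Q_le hn K
      have := Q_pos hn K
      omega
    · refine toepLetter_eq htd fun (hd : Q n (k + 2) ∣ t) => ?_
      rcases lt_or_gt_of_ne htK with h | h
      · have := Nat.le_of_dvd (by omega) (Nat.dvd_sub hqdK hd)
        omega
      · have := Nat.le_of_dvd (by omega) (Nat.dvd_sub hd hqdK)
        omega
  have hper : ∀ t, s ≤ t → t + Q n (k + 1) < Q n K + Q n (k + 2) →
      toepLetter a n t = toepLetter a n (t + Q n (k + 1)) := by
    intro t ht1 ht2
    by_cases htd : Q n (k + 1) ∣ t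
    · rw [hcen t ht1 (by omega) htd, hcen _ (by omega) ht2 (dvd_add htd dvd_rfl)]
    · exact toepLetter_congr hn (k := k + 1) (by simp [Nat.ModEq]) htd
  -- `s' + i` is the first multiple of `Q n (k+2)` at or after `s'`
  obtain ⟨i, hi, hid⟩ : ∃ i, i < Q n (k + 2) ∧ Q n (k + 2) ∣ s' + i := by
    have hq : 0 < Q n (k + 2) := by omega
    refine ⟨(Q n (k + 2) - s' % Q n (k + 2)) % Q n (k + 2), Nat.mod_lt _ hq, ?_⟩
    rw [Nat.dvd_iff_mod_eq_zero, Nat.add_mod, Nat.mod_mod, ← Nat.add_mod,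
      ← Nat.mod_add_mod, Nat.add_sub_cancel' (Nat.mod_lt _ hq).le, Nat.mod_self]
  obtain ⟨j, hj1, hj2, hj3⟩ := exists_letter (a := a) hn (show 0 < s' + i by omega) hid
  have hjK : j < K := by
    by_contra hle
    have := Nat.le_of_dvd (by omega) ((Q_dvd (not_lt.1 hle)).trans hj2)
    omega
  have hnext : toepLetter a n (s' + (i + Q n (k + 1))) = a (k + 1) := by
    rw [← add_assoc]
    refine toepLetter_eq (dvd_add ((Q_dvd (by omega)).trans hid) dvd_rfl) fun hd => ?_
    have := Nat.le_of_dvd hq0 ((Nat.dvd_add_right hid).1 hd)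
    omega
  have e1 := toepLetter_eq_of_toepWord_eq hs3 (i := i) (by omega)
  have e2 := toepLetter_eq_of_toepWord_eq hs3 (i := i + Q n (k + 1)) (by omega)
  have e3 := hper (s + i) (by omega) (by omega)
  rw [add_assoc s, e1, e2, hj3, hnext, ← hletter] at e3
  exact ne_Kf_letter hj1 hjK e3

end

/-- the subshift is linearly repetitive iff
`i ↦ ∏_{j = m i + 1}^{K (m i) - 1} n j` (for `i ≥ 1`) is bounded above. -/
theorem stmt18 {A : Type*} [Fintype A] [Nonempty A]
    (a : ℕ → A) (n : ℕ → ℕ) (hn : ∀ k, 2 ≤ n k) (ha : ∀ k, a k ≠ a (k + 1))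
    (hAev : 2 ≤ (Aev a).ncard) :
    (∃ c : ℕ, ∀ L : ℕ, 1 ≤ L → repet a n L ≤ c * L) ↔
    (∃ C : ℕ, ∀ i : ℕ, 1 ≤ i →
      ∏ j ∈ Finset.Icc (mseq a i + 1) (Kf a (mseq a i) - 1), n j ≤ C) := by
  constructor
  · rintro ⟨c, hc⟩
    refine ⟨2 * c, fun i hi => ?_⟩
    obtain ⟨i, rfl⟩ := Nat.exists_eq_add_of_le' hi
    obtain ⟨h1, h2⟩ := mseq_succ_spec hAev i
    obtain ⟨k, hk⟩ := Nat.exists_eq_add_of_lt h1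
    have hmk : mseq a (i + 1) = (mseq a i + k) + 1 := hk
    have hjump : Kf a (mseq a i + k) < Kf a (mseq a i + k + 1) := by
      have := Kf_le_of_lt_mseq_succ (a := a) (i := i) (j := mseq a i + k) (by omega) (by omega)
      rw [← hmk]; omega
    rw [hmk]
    generalize mseq a i + k = k' at hjump
    have hq := Q_pos hn (k' + 2)
    have hle := (le_repet hn hjump).trans (hc _ (by omega))
    rw [← Q_mul_prod_Icc (n := n) (Kf_spec a (k' + 1)).1] at hle
    refine Nat.le_of_mul_le_mul_left (hle.trans ?_) hq
    calc c * (2 * Q n (k' + 2) - 1) ≤ c * (2 * Q n (k' + 2)) :=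
          Nat.mul_le_mul_left _ (Nat.sub_le _ _)
      _ = Q n (k' + 2) * (2 * c) := by ring
  · rintro ⟨C, hC⟩
    obtain ⟨B, hB⟩ : ∃ B, ∀ i,
        ∏ j ∈ Finset.Icc (mseq a i + 1) (Kf a (mseq a i) - 1), n j ≤ B := by
      refine ⟨max C (∏ j ∈ Finset.Icc (mseq a 0 + 1) (Kf a (mseq a 0) - 1), n j), fun i => ?_⟩
      rcases Nat.eq_zero_or_pos i with rfl | hi
      · exact le_max_right _ _
      · exact (hC i hi).trans (le_max_left _ _)
    have hB' : ∀ k, ∏ j ∈ Finset.Icc (k + 1) (Kf a k - 1), n j ≤ B := by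
      intro k
      obtain ⟨i, h1, h2⟩ := exists_mseq_le_lt hAev k
      refine le_trans ?_ (hB i)
      have := Kf_le_of_lt_mseq_succ h1 h2
      refine Finset.prod_le_prod_of_subset_of_one_le' (Finset.Icc_subset_Icc (by omega) (by omega)) ?_
      intro j _ _
      have := hn j
      omega
    have hnB : ∀ k, n (k + 1) ≤ B := by
      intro k
      refine le_trans ?_ (hB' k)
      have := add_two_le_Kf hAev k
      refine Finset.single_le_prod' (f := n) (fun j _ => ?_) (Finset.mem_Icc.2 ⟨le_rfl, by omega⟩)
      have := hn j
      omega
    refine ⟨4 * Q n (Kf a 0) + 4 * (B * B), fun L hL => ?_⟩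
    rw [add_mul]
    by_cases hL0 : L ≤ Q n 1
    · have h1 := repet_le (a := a) hn hL0
      have h2 : 4 * Q n (Kf a 0) * 1 ≤ 4 * Q n (Kf a 0) * L := Nat.mul_le_mul_left _ hL
      omega
    · -- `k + 1` is the last index with `Q n (k+1) < L`
      obtain ⟨k, hk1, hk2⟩ : ∃ k, Q n (k + 1) < L ∧ L ≤ Q n (k + 1 + 1) := by
        by_contra! hcon
        have hall : ∀ k, Q n (k + 1) < L := by
          intro k
          induction k with
          | zero => simpa using hL0
          | succ k ih => exact hcon k ih
        have := hall L
        have := lt_Q hn (L + 1)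
        omega
      have h1 := repet_le (a := a) hn hk2
      rw [← Q_mul_prod_Icc (n := n) (Kf_spec a (k + 1)).1, Q_succ] at h1
      calc repet a n L ≤ _ := h1
        _ ≤ 4 * (L * B * B) := by
          gcongr
          · exact hnB k
          · exact hB' (k + 1)
        _ = 4 * (B * B) * L := by ring
        _ ≤ _ := Nat.le_add_left _ _
end

section
/- The following are equivalent: (1) there exists a sequence k : ℕ → ℕ with k_r ≥ 1 for all r, k_r → ∞, and a constant C such that ∏_{j = k_r + 1}^{K(k_r − 1) − 1} n_j ≤ C for all r; (2) there exists a strictly increasing sequence of indices i : ℕ → ℕ with i_r ≥ 1 and a constant C such that ∏_{j = m_{i_r} + 1}^{K(m_{i_r} − 1) − 1} n_j ≤ C for all r. -/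
/-!
The implication (2) → (1) takes `k r = mseq a (i r)`, which tends to infinity because `mseq a` and
`i` are strictly increasing.

For (1) → (2), round `k` up to the least term `mseq a (i + 1) ≥ k`, so that
`mseq a i ≤ k - 1`. By the definition of `mseq a (i + 1)`, the value of `Kf a` at
`mseq a (i + 1) - 1` is still at most `Kf a (mseq a i) ≤ Kf a (k - 1)` (`Kf_mseq_succ_sub_one_le`,
`Kf_mono`). Hence the index interval of the product attached to `mseq a (i + 1)` is contained in
the one attached to `k`, and since all `n j ≥ 1` the product does not increase. As `k r → ∞`, this
happens for arbitrarily large `i`, which gives a subsequence.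
-/

open Filter

/-- The set of which `Kf a k` is the infimum is nonempty: by finiteness of the alphabet there is
a common bound for one occurrence after `k` of each of the letters of `Ak a (k + 1)`. This makes
`Kf a k` a genuine minimum rather than the junk value `0`. -/
lemma Kf_set_nonempty {A : Type*} [Fintype A] (a : ℕ → A) (k : ℕ) :
    {j | k < j ∧ {x | ∃ i, k + 1 ≤ i ∧ i ≤ j ∧ a i = x} = Ak a (k + 1)}.Nonempty := by
  classical
  have h : ∀ x : A, ∃ j, x ∈ Ak a (k + 1) → k + 1 ≤ j ∧ a j = x := by
    intro x
    by_cases hx : x ∈ Ak a (k + 1)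
    · obtain ⟨j, hj⟩ := hx
      exact ⟨j, fun _ => hj⟩
    · exact ⟨0, fun h => absurd h hx⟩
  choose f hf using h
  refine ⟨k + 1 + Finset.univ.sup f, by omega, ?_⟩
  ext x
  constructor
  · rintro ⟨i, hi, -, rfl⟩
    exact ⟨i, hi, rfl⟩
  · intro hx
    have hle : f x ≤ Finset.univ.sup f := Finset.le_sup (Finset.mem_univ x)
    exact ⟨f x, (hf x hx).1, by omega, (hf x hx).2⟩

lemma lt_Kf {A : Type*} [Fintype A] (a : ℕ → A) (k : ℕ) : k < Kf a k :=
  (Nat.sInf_mem (Kf_set_nonempty a k)).1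

/-- If `a (k+2), …, a j` exhaust `Ak a (k + 2)`, then adding `a (k+1)` on both sides shows that
`a (k+1), …, a j` exhaust `Ak a (k + 1)`. -/
lemma Kf_mono {A : Type*} [Fintype A] (a : ℕ → A) : Monotone (Kf a) := by
  refine monotone_nat_of_le_succ fun k => ?_
  obtain ⟨h1, h2⟩ := Nat.sInf_mem (Kf_set_nonempty a (k + 1))
  change k + 1 < Kf a (k + 1) at h1
  refine Nat.sInf_le ⟨by omega, ?_⟩
  ext x
  constructor
  · rintro ⟨i, hi, -, rfl⟩
    exact ⟨i, hi, rfl⟩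
  · rintro ⟨i, hi, rfl⟩
    rcases hi.eq_or_lt with rfl | hlt
    · exact ⟨k + 1, le_rfl, h1.le, rfl⟩
    · have hmem : a i ∈ Ak a (k + 1 + 1) := ⟨i, hlt, rfl⟩
      rw [← h2] at hmem
      obtain ⟨i', hi', hij, he⟩ := hmem
      exact ⟨i', by omega, hij, he⟩

lemma mseq_lt_succ {A : Type*} [Fintype A] (a : ℕ → A) (i : ℕ) :
    mseq a i < mseq a (i + 1) := by
  have hne : {j | mseq a i < j ∧ Kf a (mseq a i) < Kf a j}.Nonempty :=
    ⟨Kf a (mseq a i), lt_Kf a _, lt_Kf a _⟩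
  exact (Nat.sInf_mem hne).1

lemma mseq_strictMono {A : Type*} [Fintype A] (a : ℕ → A) : StrictMono (mseq a) :=
  strictMono_nat_of_lt_succ (mseq_lt_succ a)

/-- `Kf a` does not grow on the interval from `mseq a i` to `mseq a (i + 1) - 1`, by minimality of
`mseq a (i + 1)`. -/
lemma Kf_mseq_succ_sub_one_le {A : Type*} [Fintype A] (a : ℕ → A) (i : ℕ) :
    Kf a (mseq a (i + 1) - 1) ≤ Kf a (mseq a i) := by
  have hlt := mseq_lt_succ a i
  by_contra! hK
  have hi : mseq a i < mseq a (i + 1) - 1 := by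
    by_contra! hle
    exact absurd (Kf_mono a hle) (by omega)
  have hmin : mseq a (i + 1) ≤ mseq a (i + 1) - 1 := Nat.sInf_le ⟨hi, hK⟩
  omega

/-- there is a sequence `k r → ∞` with bounded products
`∏_{j = k r + 1}^{K (k r - 1) - 1} n j` iff there is a subsequence `(m (i r))` of
`(m i)` with bounded products `∏_{j = m (i r) + 1}^{K (m (i r) - 1) - 1} n j`. -/
theorem stmt19 {A : Type*} [Fintype A] [Nonempty A]
    (a : ℕ → A) (n : ℕ → ℕ) (hn : ∀ k, 2 ≤ n k) (ha : ∀ k, a k ≠ a (k + 1))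
    (hAev : 2 ≤ (Aev a).ncard) :
    (∃ (k : ℕ → ℕ) (C : ℕ), (∀ r, 1 ≤ k r) ∧
        Filter.Tendsto k Filter.atTop Filter.atTop ∧
        ∀ r, ∏ j ∈ Finset.Icc (k r + 1) (Kf a (k r - 1) - 1), n j ≤ C) ↔
    (∃ (i : ℕ → ℕ) (C : ℕ), StrictMono i ∧ (∀ r, 1 ≤ i r) ∧
        ∀ r, ∏ j ∈ Finset.Icc (mseq a (i r) + 1) (Kf a (mseq a (i r) - 1) - 1), n j ≤ C) := by
  constructor
  · rintro ⟨k, C, -, hk, hC⟩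
    have hfreq : ∃ᶠ i in atTop, 1 ≤ i ∧
        ∏ j ∈ Finset.Icc (mseq a i + 1) (Kf a (mseq a i - 1) - 1), n j ≤ C := by
      refine frequently_atTop.2 fun N => ?_
      obtain ⟨r, hr⟩ := (hk.eventually_gt_atTop (mseq a N)).exists
      -- The least term of `mseq a` that is at least `k r` has an index larger than `N`.
      have hex : ∃ i, k r ≤ mseq a i := ⟨k r, (mseq_strictMono a).id_le (k r)⟩
      obtain ⟨i, hi, hmin⟩ : ∃ i, k r ≤ mseq a i ∧ ∀ l < i, mseq a l < k r :=
        ⟨Nat.find hex, Nat.find_spec hex, fun l hl => not_le.1 (Nat.find_min hex hl)⟩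
      have hNi : N < i := (mseq_strictMono a).lt_iff_lt.1 (hr.trans_le hi)
      obtain ⟨i, rfl⟩ : ∃ i', i = i' + 1 := ⟨i - 1, by omega⟩
      have hlt := hmin i (Nat.lt_succ_self i)
      have hK : Kf a (mseq a (i + 1) - 1) ≤ Kf a (k r - 1) :=
        (Kf_mseq_succ_sub_one_le a i).trans (Kf_mono a (by omega))
      refine ⟨i + 1, hNi.le, by omega, le_trans ?_ (hC r)⟩
      refine Finset.prod_le_prod_of_subset_of_one_le'
        (Finset.Icc_subset_Icc (by omega) (by omega)) fun j _ _ => ?_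
      exact one_le_two.trans (hn j)
    obtain ⟨i, hi, hP⟩ := extraction_of_frequently_atTop hfreq
    exact ⟨i, C, hi, fun r => (hP r).1, fun r => (hP r).2⟩
  · rintro ⟨i, C, hi, h1, hC⟩
    refine ⟨fun r => mseq a (i r), C, fun r => ?_, ?_, hC⟩
    · exact (h1 r).trans ((mseq_strictMono a).id_le (i r))
    · exact ((mseq_strictMono a).comp hi).tendsto_atTop
end
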